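/- arXiv:2411.02024 — 10 statements merged into one kernel-verified Lean document; each statement's English description precedes it below -/
import Mathlib

section
/- For every natural number n > 1 there exists a Borel probability measure σ on the circle ℝ/ℤ such that the n-fold convolution power σ^{*n} is mutually singular with the Haar (Lebesgue) probability measure on the circle, while the (n+1)-fold convolution power σ^{*(n+1)} is absolutely continuous with respect to the Haar measure. -/
/-!
The measure `σ` is a weak limit of normalized densities `F_j`, where `F_0 = 1` and
`F_{j+1} = F_j * g_j` for suitable continuous blocks `g_j ≥ 0` of mean `1`.

A block (`exists_block`) is the average of `m` bumps of width `ε = m^{-(n+1/2)}` centred at `m`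
points. For independent uniform points `x_i` and `k ≠ 0`, the `2(n+1)`-th moment of
`|∑ e(k x_i)|` is at most `(n+1)! m^{n+1}` (`exists_random_points`), and the Fourier coefficients
of a bump have `ℓ¹` norm `O(1/ε)` (`exists_bump`). Hence some choice of points satisfies
`∑_{k ≠ 0} |ĝ(k)|^{2(n+1)} = O(m^{-(n+1)} / ε) = O(m^{-1/2})`. On the other hand, the `n`-fold
sumset of the support of `g` is covered by `m^n` intervals of length `2nε`, so it also has
measure `O(m^{-1/2})`. Both quantities are as small as desired for `m` large.

Since `F_j` has an absolutely convergent Fourier series, Young's inequality (`young`) makes the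
`ℓ^{2(n+1)}` distance from the coefficients of `F_{j+1}` to those of `F_j` arbitrarily small
(`good_step`). The coefficients of the `F_j` therefore stay bounded in `ℓ^{2(n+1)}`, and so
`σ̂ ∈ ℓ^{2(n+1)}`. The coefficients `σ̂^{n+1}` of `σ^{*(n+1)}` are thus square-summable, and
`σ^{*(n+1)}` has an `L²` density (`absolutelyContinuous_of_summable_sq`). Meanwhile `σ` lives on
the support of every `g_j`, so `σ^{*n}` is carried by the intersection of the corresponding
`n`-fold sumsets (`convPow_concentrated`), a set of measure zero.
-/

open MeasureTheory

/-- The `k`-fold convolution power of a measure `σ` on the circle: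
`σ^{*0}` is the Dirac mass at `0`, and `σ^{*(k+1)} = σ^{*k} ∗ σ`. -/
noncomputable def convPow (σ : Measure (AddCircle (1 : ℝ))) : ℕ → Measure (AddCircle (1 : ℝ))
  | 0 => Measure.dirac 0
  | k + 1 => (convPow σ k).conv σ

open Filter Topology AddCircle
open scoped ENNReal NNReal Pointwise

local notation "𝕋" => AddCircle (1 : ℝ)

/-! ### Fourier coefficients and supports of convolution powers -/

lemma haar_eq_volume : (haarAddCircle : Measure 𝕋) = volume := by
  simp [volume_eq_smul_haarAddCircle]

instance instIsProbabilityMeasureVolumeCircle : IsProbabilityMeasure (volume : Measure 𝕋) :=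
  haar_eq_volume ▸ inferInstance

instance instIsProbabilityMeasureConvPow (σ : Measure 𝕋) [IsProbabilityMeasure σ] (k : ℕ) :
    IsProbabilityMeasure (convPow σ k) := by
  induction k with
  | zero => unfold convPow; infer_instance
  | succ k ih => unfold convPow; infer_instance

/-- Integration against a fixed integrable `f` is a continuous functional on `C(𝕋, ℂ)`; two such
functionals can therefore be compared on the Fourier monomials alone. -/
lemma exists_clm_integral_mul {μ : Measure 𝕋} {f : 𝕋 → ℂ} (hf : Integrable f μ) :
    ∃ L : C(𝕋, ℂ) →L[ℂ] ℂ, ∀ h, L h = ∫ x, h x * f x ∂μ := by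
  have hi : ∀ h : C(𝕋, ℂ), Integrable (fun x => h x * f x) μ := fun h =>
    hf.bdd_mul h.continuous.aestronglyMeasurable (c := ‖h‖)
      (ae_of_all _ fun x => h.norm_coe_le_norm x)
  refine ⟨LinearMap.mkContinuous
    { toFun := fun h => ∫ x, h x * f x ∂μ
      map_add' := fun g h => by
        simp only [ContinuousMap.add_apply, add_mul]
        exact integral_add (hi g) (hi h)
      map_smul' := fun c h => by
        simp only [ContinuousMap.smul_apply, smul_eq_mul, mul_assoc, RingHom.id_apply]
        exact integral_const_mul _ _ } (∫ x, ‖f x‖ ∂μ) fun h => ?_, fun h => rfl⟩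
  calc ‖∫ x, h x * f x ∂μ‖ ≤ ∫ x, ‖h‖ * ‖f x‖ ∂μ := by
        refine norm_integral_le_of_norm_le (hf.norm.const_mul _) (ae_of_all _ fun x => ?_)
        rw [norm_mul]
        gcongr
        exact h.norm_coe_le_norm x
    _ = (∫ x, ‖f x‖ ∂μ) * ‖h‖ := by rw [integral_const_mul, mul_comm]

/-- A finite measure with square-summable Fourier coefficients has an `L²` density. The candidate
`f` is given by the Hilbert basis; as `f` is not known in advance to be nonnegative, the identity
proved is `τ + f⁻ dx = f⁺ dx`, between positive measures. -/
lemma absolutelyContinuous_of_summable_sq (τ : Measure 𝕋) [IsFiniteMeasure τ]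
    (h : Summable fun k : ℤ => ‖∫ x, fourier k x ∂τ‖ ^ 2) :
    τ ≪ (volume : Measure 𝕋) := by
  have hc : Memℓp (fun k : ℤ => ∫ x : 𝕋, fourier (-k) x ∂τ) 2 := by
    refine memℓp_gen ?_
    simp only [ENNReal.toReal_ofNat, Real.rpow_two]
    exact (Equiv.neg ℤ).summable_iff.mpr h
  set f : Lp ℂ 2 (haarAddCircle : Measure 𝕋) :=
    (fourierBasis (T := 1)).repr.symm ⟨_, hc⟩ with hfdef
  have hfi : Integrable (f : 𝕋 → ℂ) haarAddCircle := (Lp.memLp f).integrable (by norm_num)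
  have hcoef : ∀ k : ℤ, ∫ x : 𝕋, fourier k x ∂τ = ∫ x : 𝕋, fourier k x * f x ∂haarAddCircle := by
    intro k
    have h1 := fourierBasis_repr f (-k)
    rw [hfdef, LinearIsometryEquiv.apply_symm_apply, ← hfdef] at h1
    simpa [fourierCoeff] using h1
  obtain ⟨L₁, hL₁⟩ := exists_clm_integral_mul (μ := τ) (f := fun _ => 1) (integrable_const _)
  obtain ⟨L₂, hL₂⟩ := exists_clm_integral_mul hfi
  have hL : L₁ = L₂ := by
    refine ContinuousLinearMap.ext_on (s := Set.range (fourier (T := 1))) ?_ ?_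
    · rw [dense_iff_closure_eq, ← Submodule.topologicalClosure_coe, span_fourier_closure_eq_top]
      rfl
    · rintro _ ⟨k, rfl⟩
      rw [hL₁, hL₂, ← hcoef]
      simp
  -- `τ` is real, so testing against real functions only sees the real part of `f`
  have hreal : ∀ g : C(𝕋, ℝ), ∫ x, g x ∂τ = ∫ x, g x * (f x).re ∂haarAddCircle := by
    intro g
    have h2 := DFunLike.congr_fun hL ((⟨_, Complex.continuous_ofReal⟩ : C(ℝ, ℂ)).comp g)
    rw [hL₁, hL₂] at h2
    simp only [ContinuousMap.comp_apply, ContinuousMap.coe_mk, mul_one] at h2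
    rw [integral_complex_ofReal] at h2
    have h3 := congrArg Complex.re h2
    rw [Complex.ofReal_re] at h3
    rw [h3, ← RCLike.re_eq_complex_re, ← integral_re]
    · simp
    · exact hfi.bdd_mul (by fun_prop) (c := ‖g‖)
        (ae_of_all _ fun x => by simpa using g.norm_coe_le_norm x)
  have hri : Integrable (fun x => (f x).re) (haarAddCircle : Measure 𝕋) := hfi.re
  rw [← haar_eq_volume]
  set μp := (haarAddCircle : Measure 𝕋).withDensity (fun x => ENNReal.ofReal (f x).re)
  set μm := (haarAddCircle : Measure 𝕋).withDensity (fun x => ENNReal.ofReal (-(f x).re))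
  have hfp : IsFiniteMeasure μp := isFiniteMeasure_withDensity_ofReal hri.2
  have hfm : IsFiniteMeasure μm := isFiniteMeasure_withDensity_ofReal hri.neg.2
  have key : τ + μm = μp := by
    refine ext_of_forall_integral_eq_of_IsFiniteMeasure fun g => ?_
    have hg : ∀ (μ : Measure 𝕋) [IsFiniteMeasure μ], Integrable (fun x => g x) μ :=
      fun μ _ => g.integrable μ
    have hg0 : ∫ x, g x ∂τ = ∫ x, g x * (f x).re ∂haarAddCircle := hreal g.toContinuousMap
    rw [integral_add_measure (hg _) (hg _), hg0]
    have hm : AEMeasurable (fun x => (f x).re) (haarAddCircle : Measure 𝕋) := hri.aemeasurable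
    have hm' : AEMeasurable (fun x => -(f x).re) (haarAddCircle : Measure 𝕋) := hm.neg
    rw [integral_withDensity_eq_integral_toReal_smul₀ hm'.ennreal_ofReal
        (ae_of_all _ fun x => ENNReal.ofReal_lt_top),
      integral_withDensity_eq_integral_toReal_smul₀ hm.ennreal_ofReal
        (ae_of_all _ fun x => ENNReal.ofReal_lt_top), ← integral_add]
    · refine integral_congr_ae (ae_of_all _ fun x => ?_)
      simp only [ENNReal.toReal_ofReal', smul_eq_mul]
      rcases le_total 0 (f x).re with h0 | h0
      · rw [max_eq_left h0, max_eq_right (by linarith)]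
        simp [mul_comm]
      · rw [max_eq_right h0, max_eq_left (by linarith)]
        simp; ring
    · exact hri.bdd_mul (g.continuous.aestronglyMeasurable) (c := ‖g‖)
        (ae_of_all _ fun x => g.norm_coe_le_norm x)
    · refine Integrable.mul_bdd (c := ‖g‖) ?_ (g.continuous.aestronglyMeasurable)
        (ae_of_all _ fun x => g.norm_coe_le_norm x)
      simp only [ENNReal.toReal_ofReal']
      exact hri.neg.pos_part
  have h1 : τ ≤ μp := key ▸ Measure.le_add_right le_rfl
  exact h1.absolutelyContinuous.trans (withDensity_absolutelyContinuous _ _)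

lemma integral_fourier_conv (μ ν : Measure 𝕋) [IsFiniteMeasure μ] [IsFiniteMeasure ν] (k : ℤ) :
    ∫ x, fourier k x ∂(μ.conv ν) = (∫ x, fourier k x ∂μ) * ∫ x, fourier k x ∂ν := by
  rw [Measure.conv, integral_map (by fun_prop) (by fun_prop), ← integral_prod_mul]
  simp [toCircle_add]

lemma integral_fourier_convPow (σ : Measure 𝕋) [IsProbabilityMeasure σ] (k : ℤ) (n : ℕ) :
    ∫ x, fourier k x ∂(convPow σ n) = (∫ x, fourier k x ∂σ) ^ n := by
  induction n with
  | zero => simp [convPow]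
  | succ n ih => rw [convPow, integral_fourier_conv, ih, pow_succ]

/-- If `σ` lives on the closed `ε`-neighbourhood of a finite set `C`, then `σ^{*k}` lives on the
closed `kε`-neighbourhood of the `k`-fold sumset of `C`. -/
lemma convPow_concentrated (σ : Measure 𝕋) [IsProbabilityMeasure σ] [DecidableEq 𝕋]
    (C : Finset 𝕋) (ε : ℝ)
    (h : ∀ᵐ x ∂σ, ∃ c ∈ C, dist x c ≤ ε) (k : ℕ) :
    ∀ᵐ x ∂(convPow σ k), ∃ c ∈ k • C, dist x c ≤ k * ε := by
  induction k with
  | zero =>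
    rw [convPow]
    exact (ae_dirac_iff (by
      have : {x : 𝕋 | ∃ c ∈ 0 • C, dist x c ≤ (0 : ℕ) * ε} =
        ⋃ c ∈ 0 • C, Metric.closedBall c ((0 : ℕ) * ε) := by ext; simp
      rw [this]
      exact Finset.measurableSet_biUnion _ fun _ _ => Metric.isClosed_closedBall.measurableSet)).mpr
      (by simp)
  | succ k ih =>
    have hm : MeasurableSet {x : 𝕋 | ∃ c ∈ (k + 1) • C, dist x c ≤ (k + 1 : ℕ) * ε} := by
      have : {x : 𝕋 | ∃ c ∈ (k + 1) • C, dist x c ≤ (k + 1 : ℕ) * ε} =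
        ⋃ c ∈ (k + 1) • C, Metric.closedBall c ((k + 1 : ℕ) * ε) := by ext; simp
      rw [this]
      exact Finset.measurableSet_biUnion _ fun _ _ => Metric.isClosed_closedBall.measurableSet
    rw [convPow, Measure.conv, ae_map_iff (by fun_prop) hm]
    have h1 := Measure.quasiMeasurePreserving_fst (μ := convPow σ k) (ν := σ) |>.ae ih
    have h2 := Measure.quasiMeasurePreserving_snd (μ := convPow σ k) (ν := σ) |>.ae h
    filter_upwards [h1, h2] with p hp1 hp2
    obtain ⟨c, hc, hcd⟩ := hp1
    obtain ⟨d, hd, hdd⟩ := hp2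
    refine ⟨c + d, ?_, ?_⟩
    · rw [succ_nsmul]; exact Finset.add_mem_add hc hd
    · refine (dist_add_add_le _ _ _ _).trans ?_
      push_cast
      linarith

lemma volume_nbhd_le (C : Finset 𝕋) (r : ℝ) :
    volume {x : 𝕋 | ∃ c ∈ C, dist x c ≤ r} ≤ C.card * ENNReal.ofReal (2 * r) := by
  have : {x : 𝕋 | ∃ c ∈ C, dist x c ≤ r} = ⋃ c ∈ C, Metric.closedBall c r := by ext; simp
  rw [this]
  refine (measure_biUnion_finset_le _ _).trans ?_
  rw [← nsmul_eq_mul]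
  refine Finset.sum_le_card_nsmul _ _ _ fun c _ => ?_
  rw [AddCircle.volume_closedBall]
  exact ENNReal.ofReal_le_ofReal (min_le_right _ _)

/-! ### Moments of random exponential sums -/

lemma integral_fourier (l : ℤ) : ∫ x : 𝕋, fourier l x = if l = 0 then 1 else 0 := by
  have h := congrFun (fourierCoeff_fourier (T := 1) l) 0
  rw [fourierCoeff, haar_eq_volume] at h
  simp only [neg_zero, fourier_zero, one_smul] at h
  rw [h, Pi.single_apply]
  simp [eq_comm]

lemma fourier_pow (k : ℤ) (x : 𝕋) (a : ℕ) : fourier k x ^ a = fourier (k * a) x := by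
  induction a with
  | zero => simp
  | succ a ih => rw [pow_succ, ih, ← fourier_add]; push_cast; ring_nf

/-- Averaging `‖z + u‖ ^ (2s)` over a uniform unit complex number `u` (Parseval for `(z + u) ^ s`). -/
lemma integral_norm_add_fourier_pow (z : ℂ) {k : ℤ} (hk : k ≠ 0) (s : ℕ) :
    ∫ y : 𝕋, ‖z + fourier k y‖ ^ (2 * s) =
      ∑ j ∈ Finset.range (s + 1), (s.choose j : ℝ) ^ 2 * ‖z‖ ^ (2 * j) := by
  have h1 : ∀ y : 𝕋, ((‖z + fourier k y‖ ^ (2 * s) : ℝ) : ℂ) =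
      ∑ i ∈ Finset.range (s + 1), ∑ j ∈ Finset.range (s + 1),
        (z ^ i * (starRingEnd ℂ z) ^ j * s.choose i * s.choose j) *
          fourier (k * ((j : ℤ) - i)) y := by
    intro y
    have h2 : ((‖z + fourier k y‖ ^ (2 * s) : ℝ) : ℂ) =
        (z + fourier k y) ^ s * (starRingEnd ℂ z + fourier (-k) y) ^ s := by
      rw [fourier_neg, ← map_add, ← mul_pow, Complex.mul_conj, Complex.normSq_eq_norm_sq, pow_mul]
      push_cast
      rfl
    rw [h2, add_pow, add_pow, Finset.sum_mul_sum]
    refine Finset.sum_congr rfl fun i hi => Finset.sum_congr rfl fun j hj => ?_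
    rw [fourier_pow, fourier_pow]
    have h3 : k * ((j : ℤ) - i) = k * ((s - i : ℕ) : ℤ) + -k * ((s - j : ℕ) : ℤ) := by
      rw [Nat.cast_sub (by simpa [Nat.lt_succ_iff] using hi),
        Nat.cast_sub (by simpa [Nat.lt_succ_iff] using hj)]
      ring
    rw [h3, fourier_add]
    ring
  apply Complex.ofReal_injective
  rw [← integral_complex_ofReal]
  simp_rw [h1]
  have hint : ∀ (c : ℂ) (l : ℤ), Integrable (fun y : 𝕋 => c * fourier l y) volume := fun c l =>
    (Continuous.integrable_of_hasCompactSupport (by fun_prop)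
      (HasCompactSupport.of_compactSpace _))
  rw [integral_finsetSum _ fun i _ => integrable_finsetSum _ fun j _ => hint _ _]
  push_cast
  refine Finset.sum_congr rfl fun i hi => ?_
  rw [integral_finsetSum _ fun j _ => hint _ _]
  simp_rw [integral_const_mul, integral_fourier]
  rw [Finset.sum_eq_single i]
  · simp only [sub_self, mul_zero, if_true, mul_one]
    rw [← mul_pow, Complex.mul_conj, Complex.normSq_eq_norm_sq, pow_mul]
    push_cast
    ring
  · intro j _ hj
    rw [if_neg, mul_zero]
    refine mul_ne_zero hk (sub_ne_zero.mpr (by exact_mod_cast hj))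
  · intro h; exact absurd hi h

lemma norm_fourier_apply (k : ℤ) (x : 𝕋) : ‖fourier k x‖ = 1 := Circle.norm_coe _

/-- There are `m` random points of the circle whose exponential sums have square-root cancellation
in every even moment, at every nonzero frequency. -/
lemma exists_random_points (m : ℕ) :
    ∃ (Ω : Type) (_ : MeasurableSpace Ω) (P : Measure Ω) (_ : IsProbabilityMeasure P)
      (X : ℕ → Ω → 𝕋), (∀ i, Measurable (X i)) ∧ ∀ k : ℤ, k ≠ 0 → ∀ s : ℕ,
        ∫ ω, ‖∑ i ∈ Finset.range m, fourier k (X i ω)‖ ^ (2 * s) ∂P ≤ s.factorial * (m : ℝ) ^ s := by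
  induction m with
  | zero =>
    refine ⟨Unit, inferInstance, Measure.dirac (), inferInstance, fun _ _ => 0,
      fun _ => measurable_const, fun k _ s => ?_⟩
    rcases s with _ | s <;> simp
  | succ m ih =>
    obtain ⟨Ω, _, P, _, X, hX, hM⟩ := ih
    refine ⟨Ω × 𝕋, inferInstance, P.prod volume, inferInstance,
      fun i p => if i < m then X i p.1 else p.2, ?_, fun k hk s => ?_⟩
    · intro i
      by_cases hi : i < m <;> simp only [hi, if_true, if_false]
      · exact (hX i).comp measurable_fst
      · exact measurable_snd
    have hS : ∀ p : Ω × 𝕋, ∑ i ∈ Finset.range (m + 1), fourier k (if i < m then X i p.1 else p.2)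
        = (∑ i ∈ Finset.range m, fourier k (X i p.1)) + fourier k p.2 := by
      intro p
      rw [Finset.sum_range_succ, if_neg (lt_irrefl _)]
      congr 1
      refine Finset.sum_congr rfl fun i hi => ?_
      rw [if_pos (Finset.mem_range.mp hi)]
    simp_rw [hS]
    have hme : Measurable fun ω => ∑ i ∈ Finset.range m, fourier k (X i ω) :=
      Finset.measurable_sum _ fun i _ => (fourier k).continuous.measurable.comp (hX i)
    have hbd : ∀ ω, ‖∑ i ∈ Finset.range m, fourier k (X i ω)‖ ≤ m := by
      intro ω
      refine (norm_sum_le _ _).trans ?_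
      simp_rw [norm_fourier_apply]; simp
    have hintP : ∀ j : ℕ, Integrable
        (fun ω => ‖∑ i ∈ Finset.range m, fourier k (X i ω)‖ ^ (2 * j)) P := by
      intro j
      refine Integrable.of_bound (hme.norm.pow_const _).aestronglyMeasurable ((m : ℝ) ^ (2 * j))
        (ae_of_all _ fun ω => ?_)
      rw [norm_pow, norm_norm]
      exact pow_le_pow_left₀ (norm_nonneg _) (hbd ω) _
    rw [integral_prod]
    · simp_rw [integral_norm_add_fourier_pow _ hk]
      rw [integral_finsetSum _ fun j _ => (hintP j).const_mul _]
      simp_rw [integral_const_mul]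
      calc ∑ j ∈ Finset.range (s + 1), (s.choose j : ℝ) ^ 2 *
            ∫ ω, ‖∑ i ∈ Finset.range m, fourier k (X i ω)‖ ^ (2 * j) ∂P
          ≤ ∑ j ∈ Finset.range (s + 1), s.factorial * ((m : ℝ) ^ j * 1 ^ (s - j) * s.choose j) := by
            refine Finset.sum_le_sum fun j hj => ?_
            have hj' : j ≤ s := by simpa [Nat.lt_succ_iff] using hj
            have h4 : (s.choose j : ℝ) * j.factorial ≤ s.factorial := by
              have := Nat.choose_mul_factorial_mul_factorial hj'
              have h5 : s.choose j * j.factorial ≤ s.factorial := by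
                rw [← this]
                exact Nat.le_mul_of_pos_right _ (Nat.factorial_pos _)
              exact_mod_cast h5
            calc _ ≤ (s.choose j : ℝ) ^ 2 * (j.factorial * (m : ℝ) ^ j) := by
                  gcongr; exact hM k hk j
              _ = (s.choose j * j.factorial : ℝ) * ((m : ℝ) ^ j * s.choose j) := by ring
              _ ≤ s.factorial * ((m : ℝ) ^ j * s.choose j) := by gcongr
              _ = _ := by simp
        _ = s.factorial * ((m + 1 : ℕ) : ℝ) ^ s := by
            rw [← Finset.mul_sum, ← add_pow]; push_cast; rfl
    · refine Integrable.of_bound (Measurable.aestronglyMeasurable ?_) ((m + 1 : ℝ) ^ (2 * s))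
        (ae_of_all _ fun p => ?_)
      · exact ((hme.comp measurable_fst).add
          ((fourier k).continuous.measurable.comp measurable_snd)).norm.pow_const _
      · rw [norm_pow, norm_norm]
        refine pow_le_pow_left₀ (norm_nonneg _) ((norm_add_le _ _).trans ?_) _
        rw [norm_fourier_apply]
        gcongr
        exact hbd _

/-! ### Fourier coefficients of continuous functions and bumps -/

/-- The Fourier coefficient at frequency `k` of a real continuous function on the circle. -/
noncomputable def fc (F : C(𝕋, ℝ)) (k : ℤ) : ℂ := ∫ x : 𝕋, fourier (-k) x * (F x : ℂ)

/-- A real continuous function, viewed as a complex one. -/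
def cc (F : C(𝕋, ℝ)) : C(𝕋, ℂ) := ⟨fun x => (F x : ℂ), by fun_prop⟩

lemma fc_eq_fourierCoeff (F : C(𝕋, ℝ)) : fc F = fourierCoeff (cc F) := by
  ext k
  simp only [fc, fourierCoeff, haar_eq_volume, smul_eq_mul, cc, ContinuousMap.coe_mk]

lemma integrable_of_continuous {f : 𝕋 → ℂ} (hf : Continuous f) : Integrable f volume :=
  hf.integrable_of_hasCompactSupport (HasCompactSupport.of_compactSpace _)

lemma integrable_of_continuous_real {f : 𝕋 → ℝ} (hf : Continuous f) : Integrable f volume :=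
  hf.integrable_of_hasCompactSupport (HasCompactSupport.of_compactSpace _)

lemma fc_one (k : ℤ) : fc 1 k = if k = 0 then 1 else 0 := by
  simp only [fc, ContinuousMap.one_apply, Complex.ofReal_one, mul_one]
  rw [integral_fourier]
  simp

lemma fc_sub (F G : C(𝕋, ℝ)) (k : ℤ) : fc (F - G) k = fc F k - fc G k := by
  simp only [fc, ContinuousMap.sub_apply, Complex.ofReal_sub, mul_sub]
  exact integral_sub (integrable_of_continuous (by fun_prop))
    (integrable_of_continuous (by fun_prop))

lemma fc_zero (F : C(𝕋, ℝ)) : fc F 0 = ((∫ x, F x : ℝ) : ℂ) := by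
  simp only [fc, neg_zero, fourier_zero, one_mul]
  exact integral_complex_ofReal

/-- The Fourier coefficients of a product are the convolution of the Fourier coefficients. -/
lemma hasSum_fc_mul {F : C(𝕋, ℝ)} (hF : Summable (fc F)) (g : C(𝕋, ℝ)) (k : ℤ) :
    HasSum (fun l => fc F l * fc g (k - l)) (fc (F * g) k) := by
  rw [fc_eq_fourierCoeff] at hF
  have h := hasSum_fourier_series_of_summable hF
  obtain ⟨L, hL⟩ := exists_clm_integral_mul (μ := volume)
    (f := fun x : 𝕋 => fourier (-k) x * (g x : ℂ)) (integrable_of_continuous (by fun_prop))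
  have h2 := L.hasSum h
  convert h2 using 1
  · ext l
    rw [map_smul, hL, smul_eq_mul, fc_eq_fourierCoeff]
    congr 1
    refine integral_congr_ae (ae_of_all _ fun x => ?_)
    simp only [← mul_assoc, ← fourier_add]
    congr 3
    ring
  · rw [hL]
    refine integral_congr_ae (ae_of_all _ fun x => ?_)
    simp only [cc, ContinuousMap.mul_apply, ContinuousMap.coe_mk]
    push_cast
    ring

/-- Young's inequality `‖a ⋆ b‖_p ≤ ‖a‖_1 ‖b‖_p` on `ℤ`. -/
lemma young (a b : ℤ → ℝ≥0∞) {p : ℕ} (hp : 1 ≤ p) :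
    ∑' k, (∑' l, a l * b (k - l)) ^ p ≤ (∑' l, a l) ^ p * ∑' k, b k ^ p := by
  have hp0 : (p : ℝ) ≠ 0 := by positivity
  have hp1 : (1 : ℝ) ≤ p := by exact_mod_cast hp
  have hp2 : (p : ℝ)⁻¹ ≤ 1 := inv_le_one_of_one_le₀ hp1
  have h1 : ∀ k, (∑' l, a l * b (k - l)) ^ p ≤
      (∑' l, a l) ^ (p - 1) * ∑' l, a l * b (k - l) ^ p := by
    intro k
    have h2 : ∑' l, a l * b (k - l) ≤
        (∑' l, a l) ^ (1 - (p : ℝ)⁻¹) * (∑' l, a l * b (k - l) ^ (p : ℝ)) ^ (p : ℝ)⁻¹ := by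
      rw [ENNReal.tsum_eq_iSup_sum (f := fun l => a l * b (k - l))]
      refine iSup_le fun s => (ENNReal.inner_le_weight_mul_Lp_of_nonneg s hp1 _ _).trans ?_
      gcongr
      · exact ENNReal.sum_le_tsum s
      · exact ENNReal.sum_le_tsum s
    calc _ ≤ _ := pow_le_pow_left' h2 p
      _ = _ := by
        rw [mul_pow, ← ENNReal.rpow_natCast, ← ENNReal.rpow_mul, ← ENNReal.rpow_natCast,
          ← ENNReal.rpow_mul, inv_mul_cancel₀ hp0, ENNReal.rpow_one, sub_mul, one_mul,
          inv_mul_cancel₀ hp0]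
        have : (p : ℝ) - 1 = ((p - 1 : ℕ) : ℝ) := by rw [Nat.cast_sub hp]; simp
        rw [this, ENNReal.rpow_natCast]
        simp_rw [ENNReal.rpow_natCast]
  calc _ ≤ ∑' k, (∑' l, a l) ^ (p - 1) * ∑' l, a l * b (k - l) ^ p := ENNReal.tsum_le_tsum h1
    _ = (∑' l, a l) ^ (p - 1) * ∑' l, a l * ∑' k, b k ^ p := by
        rw [ENNReal.tsum_mul_left, ENNReal.tsum_comm]
        congr 2
        ext l
        rw [ENNReal.tsum_mul_left]
        congr 1
        exact (Equiv.subRight l).tsum_eq (fun k => b k ^ p)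
    _ = _ := by
        rw [ENNReal.tsum_mul_right, ← mul_assoc, ← pow_succ, Nat.sub_add_cancel hp]

lemma tsum_enorm_fc_mul_le {F : C(𝕋, ℝ)} (hF : Summable (fc F)) (g : C(𝕋, ℝ)) {p : ℕ}
    (hp : 1 ≤ p) :
    ∑' k, ‖fc (F * g) k‖ₑ ^ p ≤ (∑' l, ‖fc F l‖ₑ) ^ p * ∑' k, ‖fc g k‖ₑ ^ p := by
  refine le_trans (ENNReal.tsum_le_tsum fun k => ?_) (young _ _ hp)
  gcongr
  rw [← (hasSum_fc_mul hF g k).tsum_eq]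
  refine enorm_tsum_le_tsum_enorm.trans (ENNReal.tsum_le_tsum fun l => ?_)
  rw [enorm_mul]

lemma summable_iff_tsum_enorm {a : ℤ → ℂ} : Summable a ↔ ∑' k, ‖a k‖ₑ ≠ ∞ := by
  rw [← summable_norm_iff]
  constructor
  · intro h
    have := h.tsum_ofReal_ne_top
    simpa [ofReal_norm] using this
  · intro h
    have := ENNReal.summable_toReal h
    simpa using this

lemma summable_fc_mul {F g : C(𝕋, ℝ)} (hF : Summable (fc F)) (hg : Summable (fc g)) :
    Summable (fc (F * g)) := by
  rw [summable_iff_tsum_enorm] at *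
  have hF' := summable_iff_tsum_enorm.mpr hF
  have := tsum_enorm_fc_mul_le hF' g (le_refl 1)
  simp only [pow_one] at this
  exact ne_top_of_le_ne_top (ENNReal.mul_ne_top hF hg) this

lemma norm_fc_le (F : C(𝕋, ℝ)) (hF : ∀ x, 0 ≤ F x) (k : ℤ) : ‖fc F k‖ ≤ ∫ x, F x := by
  refine norm_integral_le_of_norm_le (integrable_of_continuous_real F.continuous)
    (ae_of_all _ fun x => ?_)
  rw [norm_mul, norm_fourier_apply, one_mul, Complex.norm_real, Real.norm_of_nonneg (hF x)]

/-- Parseval's identity. -/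
lemma hasSum_sq_fc (v : C(𝕋, ℝ)) : HasSum (fun k => ‖fc v k‖ ^ 2) (∫ x, v x ^ 2) := by
  have h := hasSum_sq_fourierCoeff (ContinuousMap.toLp (E := ℂ) 2 haarAddCircle ℂ (cc v))
  simp_rw [fourierCoeff_toLp, ← fc_eq_fourierCoeff] at h
  convert h using 1
  rw [← haar_eq_volume]
  refine integral_congr_ae ?_
  filter_upwards [ContinuousMap.coeFn_toLp (E := ℂ) (p := 2) (𝕜 := ℂ) haarAddCircle (cc v)]
    with x hx
  rw [hx]
  simp [cc]

/-- Self-convolution squares the Fourier coefficients. -/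
lemma exists_selfConv (v : C(𝕋, ℝ)) : ∃ φ : C(𝕋, ℝ), (∀ x, φ x = ∫ y, v (x - y) * v y) ∧
    ∀ k, fc φ k = fc v k ^ 2 := by
  have hc : Continuous fun x : 𝕋 => ∫ y : 𝕋, v (x - y) * v y := by
    have := continuous_parametric_integral_of_continuous (μ := (volume : Measure 𝕋))
      (f := fun x y : 𝕋 => v (x - y) * v y) (by unfold Function.uncurry; fun_prop)
      (isCompact_univ (X := 𝕋))
    simpa using this
  refine ⟨⟨_, hc⟩, fun x => rfl, fun k => ?_⟩
  simp only [fc, ContinuousMap.coe_mk]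
  have h1 : ∀ x : 𝕋, fourier (-k) x * ((∫ y : 𝕋, v (x - y) * v y : ℝ) : ℂ) =
      ∫ y : 𝕋, (fourier (-k) (x - y) * v (x - y)) * (fourier (-k) y * v y) := by
    intro x
    rw [← integral_complex_ofReal, ← integral_const_mul]
    refine integral_congr_ae (ae_of_all _ fun y => ?_)
    have : fourier (-k) x = fourier (-k) (x - y) * fourier (-k) y := by
      simp only [fourier_apply]
      rw [← Circle.coe_mul, ← toCircle_add, ← smul_add, sub_add_cancel]
    simp only [this]
    push_cast
    ring
  simp_rw [h1]
  rw [integral_integral_swap]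
  · simp_rw [integral_mul_const]
    have h2 : ∀ y : 𝕋, ∫ x : 𝕋, fourier (-k) (x - y) * (v (x - y) : ℂ) =
        ∫ x : 𝕋, fourier (-k) x * (v x : ℂ) := fun y =>
      integral_sub_right_eq_self (fun x : 𝕋 => fourier (-k) x * (v x : ℂ)) y
    simp_rw [h2]
    rw [integral_const_mul, sq]
  · refine Continuous.integrable_of_hasCompactSupport ?_ (HasCompactSupport.of_compactSpace _)
    unfold Function.uncurry
    fun_prop

/-- Bumps of width `ε` with nonnegative values, mean `1`, and `ℓ¹` Fourier norm at most `4 / ε`. -/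
lemma exists_bump {ε : ℝ} (h0 : 0 < ε) (h1 : ε ≤ 1 / 2) : ∃ φ : C(𝕋, ℝ), (∀ x, 0 ≤ φ x) ∧
    (∀ x, φ x ≠ 0 → ‖x‖ ≤ ε) ∧ fc φ 0 = 1 ∧ (∀ k, ‖fc φ k‖ ≤ 1) ∧ Summable (fc φ) ∧
    ∑' k, ‖fc φ k‖ₑ ≤ ENNReal.ofReal (4 / ε) := by
  set w : C(𝕋, ℝ) := ⟨fun x => max 0 (ε / 2 - ‖x‖), by fun_prop⟩ with hw
  have hwx : ∀ x, w x = max 0 (ε / 2 - ‖x‖) := fun x => rfl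
  have hw0 : ∀ x, 0 ≤ w x := fun x => le_max_left _ _
  have hwle : ∀ x, w x ≤ ε / 2 := fun x => max_le (by linarith) (by linarith [norm_nonneg x])
  set I := ∫ x, w x with hI
  have hIlow : ε ^ 2 / 8 ≤ I := by
    have h2 : ∫ x in Metric.closedBall (0 : 𝕋) (ε / 4), (ε / 4 : ℝ) ≤ I := by
      refine le_trans (setIntegral_mono_on (by simp) (integrable_of_continuous_real
        w.continuous).integrableOn Metric.isClosed_closedBall.measurableSet fun x hx => ?_)
        (setIntegral_le_integral (integrable_of_continuous_real w.continuous)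
          (ae_of_all _ hw0))
      rw [mem_closedBall_zero_iff] at hx
      exact le_max_of_le_right (by linarith)
    rw [setIntegral_const, measureReal_def, AddCircle.volume_closedBall, min_eq_right (by linarith),
      ENNReal.toReal_ofReal (by linarith), smul_eq_mul] at h2
    linarith
  have hIpos : 0 < I := lt_of_lt_of_le (by positivity) hIlow
  set v : C(𝕋, ℝ) := I⁻¹ • w with hv
  have hvx : ∀ x, v x = I⁻¹ * w x := fun x => rfl
  have hv0 : ∀ x, 0 ≤ v x := fun x => mul_nonneg (by positivity) (hw0 x)
  have hvI : ∫ x, v x = 1 := by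
    simp_rw [hvx]
    rw [integral_const_mul, inv_mul_cancel₀ hIpos.ne']
  have hvs : ∀ x, v x ≠ 0 → ‖x‖ ≤ ε / 2 := by
    intro x hx
    by_contra hcon
    exact hx (by rw [hvx, hwx, max_eq_left (by linarith), mul_zero])
  have hv2 : ∫ x, v x ^ 2 ≤ 4 / ε := by
    have h3 : ∫ x, v x ^ 2 ≤ ∫ x, (I⁻¹ * (ε / 2)) * v x := by
      refine integral_mono (integrable_of_continuous_real (by fun_prop))
        (integrable_of_continuous_real (by fun_prop)) fun x => ?_
      simp only [sq]
      gcongr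
      · exact hv0 x
      · rw [hvx]
        gcongr
        exact hwle x
    rw [integral_const_mul, hvI, mul_one] at h3
    refine h3.trans ?_
    rw [inv_mul_le_iff₀ hIpos]
    calc ε / 2 = ε ^ 2 / 8 * (4 / ε) := by field_simp; norm_num
      _ ≤ I * (4 / ε) := by gcongr
  obtain ⟨φ, hφ, hφc⟩ := exists_selfConv v
  have hs := hasSum_sq_fc v
  have hn : ∀ k, ‖fc φ k‖ = ‖fc v k‖ ^ 2 := fun k => by rw [hφc, norm_pow]
  refine ⟨φ, fun x => ?_, fun x hx => ?_, ?_, fun k => ?_, ?_, ?_⟩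
  · rw [hφ]
    exact integral_nonneg fun y => mul_nonneg (hv0 _) (hv0 _)
  · by_contra hcon
    refine hx ?_
    rw [hφ]
    refine integral_eq_zero_of_ae (ae_of_all _ fun y => ?_)
    by_contra hne
    obtain ⟨ha, hb⟩ := mul_ne_zero_iff.mp hne
    have := norm_add_le (x - y) y
    rw [sub_add_cancel] at this
    linarith [hvs _ ha, hvs _ hb]
  · rw [hφc, fc_zero, hvI]; simp
  · rw [hn]
    have := norm_fc_le v hv0 k
    rw [hvI] at this
    exact pow_le_one₀ (norm_nonneg _) this
  · rw [← summable_norm_iff]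
    simp_rw [hn]
    exact hs.summable
  · have h4 : ∀ k, ‖fc φ k‖ₑ = ENNReal.ofReal (‖fc v k‖ ^ 2) := fun k => by
      rw [← hn, ofReal_norm]
    simp_rw [h4]
    rw [← ENNReal.ofReal_tsum_of_nonneg (fun k => by positivity) hs.summable, hs.tsum_eq]
    exact ENNReal.ofReal_le_ofReal hv2

/-! ### The building block -/

/-- The average `g` of the translates of `φ` to the points `x 0, …, x (m - 1)`. -/
lemma exists_empirical (φ : C(𝕋, ℝ)) (hφ : ∀ x, 0 ≤ φ x) (m : ℕ) (x : ℕ → 𝕋) :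
    ∃ g : C(𝕋, ℝ), (∀ y, 0 ≤ g y) ∧ (∀ y, g y ≠ 0 → ∃ i < m, φ (y - x i) ≠ 0) ∧
      ∀ k, fc g k = fc φ k * ((m : ℂ)⁻¹ * ∑ i ∈ Finset.range m, fourier (-k) (x i)) := by
  refine ⟨⟨fun y => (m : ℝ)⁻¹ * ∑ i ∈ Finset.range m, φ (y - x i), by fun_prop⟩, fun y => ?_,
    fun y hy => ?_, fun k => ?_⟩
  · exact mul_nonneg (by positivity) (Finset.sum_nonneg fun i _ => hφ _)
  · obtain ⟨i, hi, hne⟩ := Finset.exists_ne_zero_of_sum_ne_zero (mul_ne_zero_iff.mp hy).2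
    exact ⟨i, Finset.mem_range.mp hi, hne⟩
  · have h1 : ∀ i, ∫ y : 𝕋, fourier (-k) y * (φ (y - x i) : ℂ) = fourier (-k) (x i) * fc φ k := by
      intro i
      rw [fc, ← integral_const_mul,
        ← integral_sub_right_eq_self (fun y : 𝕋 => fourier (-k) (x i) *
          (fourier (-k) y * (φ y : ℂ))) (x i)]
      refine integral_congr_ae (ae_of_all _ fun y => ?_)
      have : fourier (-k) y = fourier (-k) (x i) * fourier (-k) (y - x i) := by
        simp only [fourier_apply]
        rw [← Circle.coe_mul, ← toCircle_add, ← smul_add, add_sub_cancel]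
      simp only [this]
      ring
    have h2 : ∀ y : 𝕋, fourier (-k) y * (((m : ℝ)⁻¹ * ∑ i ∈ Finset.range m, φ (y - x i) : ℝ) : ℂ) =
        (m : ℂ)⁻¹ * ∑ i ∈ Finset.range m, fourier (-k) y * (φ (y - x i) : ℂ) := by
      intro y
      push_cast
      rw [← Finset.mul_sum]
      ring
    rw [fc]
    simp only [ContinuousMap.coe_mk]
    simp_rw [h2]
    rw [integral_const_mul, integral_finsetSum _ fun i _ => integrable_of_continuous (by fun_prop)]
    simp_rw [h1]
    rw [← Finset.sum_mul]
    ring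

/-- The building block: a density `g` which is close to `1` in the sense that its nonzero Fourier
coefficients are small in `ℓ^{2(n+1)}`, although the `n`-fold sumset of its support is small. -/
lemma exists_block (n : ℕ) {δ : ℝ} (hδ : 0 < δ) :
    ∃ (g : C(𝕋, ℝ)) (C : Finset 𝕋) (ε : ℝ), (∀ x, 0 ≤ g x) ∧ Summable (fc g) ∧
      (∀ x, g x ≠ 0 → ∃ c ∈ C, dist x c ≤ ε) ∧ (C.card : ℝ) ^ n * (2 * (n * ε)) ≤ δ ∧
      ∑' k, ‖fc (g - 1) k‖ₑ ^ (2 * (n + 1)) ≤ ENNReal.ofReal δ := by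
  classical
  obtain ⟨r, hr⟩ := exists_nat_gt (max 2 (max (2 * n / δ) ((n + 1).factorial * 4 / δ)))
  have hr2 : (2 : ℝ) < r := (le_max_left _ _).trans_lt hr
  have hr3 : 2 * n / δ < r := ((le_max_left _ _).trans (le_max_right _ _)).trans_lt hr
  have hr4 : (n + 1).factorial * 4 / δ < r :=
    ((le_max_right _ _).trans (le_max_right _ _)).trans_lt hr
  have hr0 : (0 : ℝ) < r := by linarith
  rw [div_lt_iff₀ hδ] at hr3 hr4
  -- `m = r²` points and width `ε = m ^ (-(n + 1/2))`
  set m := r ^ 2 with hm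
  have hm0 : (0 : ℝ) < m := by rw [hm]; push_cast; positivity
  set ε : ℝ := ((r : ℝ) ^ (2 * n + 1))⁻¹ with hε
  have hε0 : 0 < ε := by positivity
  have hε1 : ε ≤ 1 / 2 := by
    rw [hε, one_div]
    refine inv_anti₀ (by norm_num) (hr2.le.trans ?_)
    exact le_self_pow₀ (by linarith) (by omega)
  obtain ⟨φ, hφ0, hφs, hφ1, hφb, hφsum, hφt⟩ := exists_bump hε0 hε1
  obtain ⟨Ω, _, P, _, X, hX, hM⟩ := exists_random_points m
  set s := n + 1 with hs
  -- the random quantity to be made small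
  set Φ : ℤ → Ω → ℝ≥0∞ := fun k ω => if k = 0 then 0 else
    ‖fc φ k * ((m : ℂ)⁻¹ * ∑ i ∈ Finset.range m, fourier (-k) (X i ω))‖ₑ ^ (2 * s) with hΦ
  have hΦm : ∀ k, Measurable (Φ k) := by
    intro k
    by_cases hk : k = 0
    · simp only [hΦ, hk, if_true]; exact measurable_const
    · simp only [hΦ, hk, if_false]
      refine Measurable.pow_const (Measurable.enorm (Measurable.const_mul
        (Measurable.const_mul ?_ _) _)) _
      exact Finset.measurable_sum _ fun i _ => (fourier (-k)).continuous.measurable.comp (hX i)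
  have hΦk : ∀ k, ∫⁻ ω, Φ k ω ∂P ≤ ENNReal.ofReal (s.factorial / (m : ℝ) ^ s) * ‖fc φ k‖ₑ := by
    intro k
    by_cases hk : k = 0
    · simp [hΦ, hk]
    have h1 : ∀ ω, Φ k ω = ENNReal.ofReal (‖fc φ k‖ ^ (2 * s) * ((m : ℝ)⁻¹) ^ (2 * s)) *
        ENNReal.ofReal (‖∑ i ∈ Finset.range m, fourier (-k) (X i ω)‖ ^ (2 * s)) := by
      intro ω
      simp only [hΦ, hk, if_false]
      rw [← ENNReal.ofReal_mul (by positivity), ← ofReal_norm, ← ENNReal.ofReal_pow (by positivity),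
        norm_mul, norm_mul, norm_inv, Complex.norm_natCast]
      congr 1
      ring
    simp_rw [h1]
    have hmeas : Measurable fun ω => ‖∑ i ∈ Finset.range m, fourier (-k) (X i ω)‖ ^ (2 * s) :=
      (Finset.measurable_sum _ fun i _ =>
        (fourier (-k)).continuous.measurable.comp (hX i)).norm.pow_const _
    rw [lintegral_const_mul _ hmeas.ennreal_ofReal, ← ofReal_integral_eq_lintegral_ofReal]
    · rw [← ENNReal.ofReal_mul (by positivity), ← ofReal_norm, ← ENNReal.ofReal_mul (by positivity)]
      refine ENNReal.ofReal_le_ofReal ?_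
      calc _ ≤ ‖fc φ k‖ ^ 1 * ((m : ℝ)⁻¹) ^ (2 * s) * (s.factorial * (m : ℝ) ^ s) := by
            gcongr ?_ * _ * ?_
            · exact pow_le_pow_of_le_one (norm_nonneg _) (hφb k) (by omega)
            · exact hM (-k) (neg_ne_zero.mpr hk) s
        _ = s.factorial / (m : ℝ) ^ s * ‖fc φ k‖ := by
            rw [pow_one, two_mul, pow_add, inv_pow]
            field_simp
    · refine Integrable.of_bound hmeas.aestronglyMeasurable ((m : ℝ) ^ (2 * s))
        (ae_of_all _ fun ω => ?_)
      rw [norm_pow, norm_norm]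
      refine pow_le_pow_left₀ (norm_nonneg _) ((norm_sum_le _ _).trans ?_) _
      simp_rw [norm_fourier_apply]
      simp
    · exact ae_of_all _ fun ω => by positivity
  have hΦt : ∫⁻ ω, ∑' k, Φ k ω ∂P ≤ ENNReal.ofReal δ := by
    rw [lintegral_tsum fun k => (hΦm k).aemeasurable]
    calc _ ≤ ∑' k, ENNReal.ofReal (s.factorial / (m : ℝ) ^ s) * ‖fc φ k‖ₑ :=
          ENNReal.tsum_le_tsum hΦk
      _ ≤ ENNReal.ofReal (s.factorial / (m : ℝ) ^ s) * ENNReal.ofReal (4 / ε) := by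
          rw [ENNReal.tsum_mul_left]; gcongr
      _ ≤ ENNReal.ofReal δ := by
          rw [← ENNReal.ofReal_mul (by positivity)]
          refine ENNReal.ofReal_le_ofReal ?_
          have : (s.factorial / (m : ℝ) ^ s) * (4 / ε) = s.factorial * 4 / r := by
            rw [hε, hm, hs]
            push_cast
            field_simp
            ring
          rw [this, div_le_iff₀ hr0]
          linarith
  obtain ⟨ω, hω⟩ := exists_le_lintegral (μ := P)
    (Measurable.tsum (L := SummationFilter.unconditional ℤ) hΦm).aemeasurable
  obtain ⟨g, hg0, hgs, hgc⟩ := exists_empirical φ hφ0 m (fun i => X i ω)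
  refine ⟨g, (Finset.range m).image fun i => X i ω, ε, hg0, ?_, fun x hx => ?_, ?_, ?_⟩
  · refine Summable.of_norm_bounded hφsum.norm fun k => ?_
    rw [hgc, norm_mul]
    refine mul_le_of_le_one_right (norm_nonneg _) ?_
    rw [norm_mul, norm_inv, Complex.norm_natCast, inv_mul_le_iff₀ hm0, mul_one]
    refine (norm_sum_le _ _).trans ?_
    simp_rw [norm_fourier_apply]
    simp
  · obtain ⟨i, hi, hne⟩ := hgs x hx
    refine ⟨X i ω, Finset.mem_image_of_mem _ (Finset.mem_range.mpr hi), ?_⟩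
    rw [dist_eq_norm]
    exact hφs _ hne
  · have hcard : ((((Finset.range m).image fun i => X i ω).card : ℕ) : ℝ) ≤ m := by
      exact_mod_cast Finset.card_image_le.trans (Finset.card_range m).le
    calc _ ≤ (m : ℝ) ^ n * (2 * (n * ε)) := by gcongr
      _ = 2 * n / r := by
          rw [hε, hm]
          push_cast
          field_simp
          ring
      _ ≤ δ := by rw [div_le_iff₀ hr0]; linarith
  · refine le_trans (le_of_eq ?_) (hω.trans hΦt)
    refine tsum_congr fun k => ?_
    rw [fc_sub, fc_one, hgc]
    by_cases hk : k = 0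
    · have : (m : ℂ) ≠ 0 := by exact_mod_cast hm0.ne'
      simp [hΦ, hk, hφ1, this]
    · simp [hΦ, hk]

/-! ### The inductive construction -/

/-- The invariant: nonnegative, in the Wiener algebra, total mass above `1/2` and
`ℓ^{2(n+1)}` norm of the Fourier coefficients below `2`. -/
def Good (n : ℕ) (F : C(𝕋, ℝ)) : Prop :=
  (∀ x, 0 ≤ F x) ∧ Summable (fc F) ∧ 1 / 2 < ∫ x, F x ∧
    eLpNorm (fc F) (2 * (n + 1) : ℕ) Measure.count < 2

lemma eLpNorm_count_pow (a : ℤ → ℂ) {p : ℕ} (hp : 1 ≤ p) :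
    eLpNorm a p Measure.count = (∑' k, ‖a k‖ₑ ^ p) ^ (p : ℝ)⁻¹ := by
  rw [eLpNorm_eq_lintegral_rpow_enorm_toReal (by exact_mod_cast (by omega : p ≠ 0)) (by simp),
    lintegral_count]
  simp

lemma good_one (n : ℕ) : Good n 1 := by
  have hp : 1 ≤ 2 * (n + 1) := by omega
  refine ⟨fun x => zero_le_one, ?_, ?_, ?_⟩
  · refine summable_of_ne_finset_zero (s := {0}) fun k hk => ?_
    rw [fc_one, if_neg (by simpa using hk)]
  · simp
    norm_num
  · rw [eLpNorm_count_pow _ hp, tsum_eq_single 0]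
    · simp [fc_one]
    · intro k hk
      rw [fc_one, if_neg hk]
      simp

/-- Multiplying a good density by a sufficiently fine block keeps it good: by Young, the change of
the Fourier coefficients in `ℓ^{2(n+1)}` is at most `‖fc F‖₁` times that of the block, and the strict
inequalities in `Good` leave room for it. The new support is also confined to a set whose `n`-fold
sumset has measure at most `η`. -/
lemma good_step (n : ℕ) {F : C(𝕋, ℝ)} (hF : Good n F) {η : ℝ} (hη : 0 < η) :
    ∃ (G : C(𝕋, ℝ)) (C : Finset 𝕋) (ε : ℝ), Good n G ∧
      (∀ x, G x ≠ 0 → F x ≠ 0 ∧ ∃ c ∈ C, dist x c ≤ ε) ∧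
      (C.card : ℝ) ^ n * (2 * (n * ε)) ≤ η := by
  obtain ⟨hF0, hFs, hFI, hFp⟩ := hF
  set p := 2 * (n + 1) with hpdef
  have hp : 1 ≤ p := by omega
  have hp0 : (p : ℝ) ≠ 0 := by positivity
  set A := ∑' l, ‖fc F l‖ₑ with hA
  have hAtop : A ≠ ∞ := summable_iff_tsum_enorm.mp hFs
  -- `ρ` is the admissible size of the perturbation in `ℓ^p`
  obtain ⟨ρ, hρ0, hρ1, hρ2⟩ : ∃ ρ : ℝ, 0 < ρ ∧ 1 / 2 + ρ < ∫ x, F x ∧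
      eLpNorm (fc F) p Measure.count + ENNReal.ofReal ρ < 2 := by
    obtain ⟨t, ht0, ht⟩ := ENNReal.lt_iff_exists_add_pos_lt.mp hFp
    refine ⟨min t (((∫ x, F x) - 1 / 2) / 2), lt_min (by exact_mod_cast ht0) (by linarith),
      ?_, ?_⟩
    · have := min_le_right (t : ℝ) (((∫ x, F x) - 1 / 2) / 2)
      linarith
    · refine lt_of_le_of_lt ?_ ht
      gcongr
      rw [← ENNReal.ofReal_coe_nnreal]
      exact ENNReal.ofReal_le_ofReal (min_le_left _ _)
  have hA1 : 0 < A.toReal + 1 := by positivity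
  obtain ⟨g, C, ε, hg0, hgs, hgC, hCε, hgδ⟩ := exists_block n
    (δ := min η ((ρ / (A.toReal + 1)) ^ p)) (lt_min hη (by positivity))
  have hdiff : ∀ k, fc (F * g) k - fc F k = fc (F * (g - 1)) k := by
    intro k
    rw [mul_sub, mul_one, fc_sub]
  have hsmall : eLpNorm (fun k => fc (F * g) k - fc F k) p Measure.count ≤ ENNReal.ofReal ρ := by
    simp_rw [hdiff]
    rw [eLpNorm_count_pow _ hp]
    calc _ ≤ (A ^ p * ENNReal.ofReal ((ρ / (A.toReal + 1)) ^ p)) ^ (p : ℝ)⁻¹ := by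
          gcongr
          refine (tsum_enorm_fc_mul_le hFs _ hp).trans ?_
          gcongr
          exact hgδ.trans (ENNReal.ofReal_le_ofReal (min_le_right _ _))
      _ = A * ENNReal.ofReal (ρ / (A.toReal + 1)) := by
          rw [ENNReal.ofReal_pow (by positivity), ← mul_pow, ← ENNReal.rpow_natCast,
            ← ENNReal.rpow_mul, mul_inv_cancel₀ hp0, ENNReal.rpow_one]
      _ ≤ ENNReal.ofReal ρ := by
          rw [← ENNReal.ofReal_toReal hAtop, ← ENNReal.ofReal_mul (by positivity)]
          refine ENNReal.ofReal_le_ofReal ?_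
          rw [ENNReal.toReal_ofReal (by positivity), mul_div_assoc', div_le_iff₀ hA1]
          nlinarith
  refine ⟨F * g, C, ε, ⟨fun x => mul_nonneg (hF0 x) (hg0 x), summable_fc_mul hFs hgs, ?_, ?_⟩,
    fun x hx => ⟨(mul_ne_zero_iff.mp hx).1, hgC x (mul_ne_zero_iff.mp hx).2⟩,
    hCε.trans (min_le_left _ _)⟩
  · have h1 := (enorm_le_eLpNorm_count (fun k => fc (F * g) k - fc F k) 0
      (p := (p : ℝ≥0∞)) (by exact_mod_cast (by omega : p ≠ 0))).trans hsmall
    rw [← ofReal_norm, ENNReal.ofReal_le_ofReal_iff hρ0.le, fc_zero, fc_zero,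
      ← Complex.ofReal_sub, Complex.norm_real, Real.norm_eq_abs, abs_le] at h1
    linarith [h1.1]
  · calc eLpNorm (fc (F * g)) p Measure.count
        = eLpNorm (fc F + fun k => fc (F * g) k - fc F k) p Measure.count := by
          congr 1; ext k; simp
      _ ≤ eLpNorm (fc F) p Measure.count + ENNReal.ofReal ρ :=
          (eLpNorm_add_le .of_discrete .of_discrete (by exact_mod_cast hp)).trans (by gcongr)
      _ < 2 := hρ2

/-! ### The limit measure -/

/-- Normalizing a good density to mass `1` costs at most a factor `2` in the Fourier coefficients. -/
lemma Good.exists_probabilityMeasure {n : ℕ} {F : C(𝕋, ℝ)} (hF : Good n F) :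
    ∃ P : ProbabilityMeasure 𝕋, (∀ᵐ x ∂(P : Measure 𝕋), F x ≠ 0) ∧
      ∀ s : Finset ℤ,
        ∑ k ∈ s, ‖∫ x, fourier k x ∂(P : Measure 𝕋)‖ ^ (2 * (n + 1)) ≤ 4 ^ (2 * (n + 1)) := by
  obtain ⟨hF0, -, hFI, hFp⟩ := hF
  set I := ∫ x, F x with hI
  have hI0 : 0 < I := by linarith
  have hFi := integrable_of_continuous_real F.continuous
  have hmeas : Measurable fun x => ENNReal.ofReal (I⁻¹ * F x) := by fun_prop
  set μ : Measure 𝕋 := volume.withDensity fun x => ENNReal.ofReal (I⁻¹ * F x) with hμ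
  have hprob : IsProbabilityMeasure μ := by
    refine ⟨?_⟩
    rw [hμ, withDensity_apply _ MeasurableSet.univ, Measure.restrict_univ,
      ← ofReal_integral_eq_lintegral_ofReal (hFi.const_mul _)
        (ae_of_all _ fun x => mul_nonneg (by positivity) (hF0 x)),
      integral_const_mul, inv_mul_cancel₀ hI0.ne', ENNReal.ofReal_one]
  refine ⟨⟨μ, hprob⟩, ?_, fun s => ?_⟩
  · rw [ProbabilityMeasure.coe_mk, hμ, ae_withDensity_iff hmeas]
    refine ae_of_all _ fun x hx h0 => hx ?_
    simp [h0]
  · have h1 : ∀ k : ℤ, ‖∫ x, fourier k x ∂μ‖ ≤ 2 * ‖fc F (-k)‖ := by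
      intro k
      have h2 : ∫ x, fourier k x ∂μ = (I⁻¹ : ℂ) * fc F (-k) := by
        rw [hμ, integral_withDensity_eq_integral_toReal_smul hmeas
          (ae_of_all _ fun x => ENNReal.ofReal_lt_top), fc, ← integral_const_mul]
        refine integral_congr_ae (ae_of_all _ fun x => ?_)
        simp only [neg_neg]
        rw [ENNReal.toReal_ofReal (mul_nonneg (by positivity) (hF0 x)), Complex.real_smul]
        push_cast
        ring
      rw [h2, norm_mul, norm_inv, Complex.norm_real, Real.norm_of_nonneg hI0.le]
      gcongr
      rw [inv_le_comm₀ hI0 (by norm_num)]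
      linarith
    have hp : 1 ≤ 2 * (n + 1) := by omega
    rw [eLpNorm_count_pow _ hp] at hFp
    have h3 : ∑' k, ‖fc F k‖ₑ ^ (2 * (n + 1)) ≤ 2 ^ (2 * (n + 1)) := by
      have := pow_le_pow_left' hFp.le (2 * (n + 1))
      rwa [← ENNReal.rpow_natCast, ← ENNReal.rpow_mul, inv_mul_cancel₀ (by positivity),
        ENNReal.rpow_one] at this
    have h4 : ∑ k ∈ s, ‖fc F (-k)‖ ^ (2 * (n + 1)) ≤ 2 ^ (2 * (n + 1)) := by
      have h5 : ∑ k ∈ s, ‖fc F (-k)‖ₑ ^ (2 * (n + 1)) ≤ 2 ^ (2 * (n + 1)) := by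
        refine le_trans (ENNReal.sum_le_tsum s) (le_trans (le_of_eq ?_) h3)
        exact (Equiv.neg ℤ).tsum_eq fun k => ‖fc F k‖ₑ ^ (2 * (n + 1))
      simp_rw [← ofReal_norm] at h5
      rw [Finset.sum_congr rfl fun k _ => (ENNReal.ofReal_pow (norm_nonneg _) _).symm,
        ← ENNReal.ofReal_sum_of_nonneg (fun k _ => by positivity)] at h5
      rw [← ENNReal.ofReal_ofNat, ← ENNReal.ofReal_pow (by norm_num)] at h5
      exact (ENNReal.ofReal_le_ofReal_iff (by positivity)).mp h5
    calc _ ≤ ∑ k ∈ s, 2 ^ (2 * (n + 1)) * ‖fc F (-k)‖ ^ (2 * (n + 1)) := by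
          refine Finset.sum_le_sum fun k _ => ?_
          rw [← mul_pow]
          exact pow_le_pow_left₀ (norm_nonneg _) (h1 k) _
      _ ≤ 2 ^ (2 * (n + 1)) * 2 ^ (2 * (n + 1)) := by
          rw [← Finset.mul_sum]; gcongr
      _ = 4 ^ (2 * (n + 1)) := by rw [← mul_pow]; norm_num

/-- Iteration of `good_step` from the constant `1`. Supports decrease, so `F j` is subject to the
confinement imposed at every earlier step `i < j`. -/
lemma exists_good_seq (n : ℕ) : ∃ (F : ℕ → C(𝕋, ℝ)) (C : ℕ → Finset 𝕋) (ε : ℕ → ℝ),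
    (∀ j, Good n (F j)) ∧
    (∀ i j, i < j → ∀ x, F j x ≠ 0 → ∃ c ∈ C i, dist x c ≤ ε i) ∧
    ∀ j, ((C j).card : ℝ) ^ n * (2 * (n * ε j)) ≤ 1 / ((j : ℝ) + 1) := by
  choose G C ε hG hs hC using fun (F : {F : C(𝕋, ℝ) // Good n F}) (j : ℕ) =>
    good_step n F.2 (η := 1 / ((j : ℝ) + 1)) (by positivity)
  let S : ℕ → {F : C(𝕋, ℝ) // Good n F} :=
    fun j => Nat.rec ⟨1, good_one n⟩ (fun j F => ⟨G F j, hG F j⟩) j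
  have hS : ∀ j, (S (j + 1)).1 = G (S j) j := fun j => rfl
  refine ⟨fun j => (S j).1, fun j => C (S j) j, fun j => ε (S j) j, fun j => (S j).2, ?_,
    fun j => hC (S j) j⟩
  intro i j hij
  induction j, hij using Nat.le_induction with
  | base => exact fun x hx => (hs (S i) i x hx).2
  | succ j _ ih => exact fun x hx => ih x (hs (S j) j x hx).1

/-- For every natural `n > 1` there is a Borel probability measure `σ` on the circle `ℝ/ℤ`
such that `σ^{*n}` is mutually singular with the Haar (Lebesgue) probability measure,
while `σ^{*(n+1)}` is absolutely continuous with respect to it. -/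
theorem exists_measure_convPow_singular_convPow_succ_absolutelyContinuous
    (n : ℕ) (hn : 1 < n) :
    ∃ σ : Measure (AddCircle (1 : ℝ)), IsProbabilityMeasure σ ∧
      (convPow σ n) ⟂ₘ (volume : Measure (AddCircle (1 : ℝ))) ∧
      (convPow σ (n + 1)) ≪ (volume : Measure (AddCircle (1 : ℝ))) := by
  classical
  obtain ⟨F, C, ε, hF, hsupp, hC⟩ := exists_good_seq n
  choose P hPF hPs using fun j => (hF j).exists_probabilityMeasure
  obtain ⟨σ, θ, hθ, hlim⟩ := CompactSpace.tendsto_subseq P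
  refine ⟨σ, inferInstance, ?_, ?_⟩
  · -- the confining sets are closed, hence inherited by the weak limit
    have hconc : ∀ i, ∀ᵐ x ∂(σ : Measure 𝕋), ∃ c ∈ C i, dist x c ≤ ε i := by
      intro i
      have hset : {x : 𝕋 | ∃ c ∈ C i, dist x c ≤ ε i} = ⋃ c ∈ C i, Metric.closedBall c (ε i) := by
        ext; simp
      have hclosed : IsClosed {x : 𝕋 | ∃ c ∈ C i, dist x c ≤ ε i} := by
        rw [hset]
        exact (C i).finite_toSet.isClosed_biUnion fun c _ => Metric.isClosed_closedBall
      have h1 := ProbabilityMeasure.le_liminf_measure_open_of_tendsto hlim hclosed.isOpen_compl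
      refine le_antisymm (h1.trans (le_of_eq ?_)) zero_le
      refine (tendsto_const_nhds.congr' ?_).liminf_eq
      filter_upwards [eventually_gt_atTop i] with j hj
      refine Eq.symm ?_
      have h2 : ∀ᵐ x ∂(P (θ j) : Measure 𝕋), ∃ c ∈ C i, dist x c ≤ ε i := by
        filter_upwards [hPF (θ j)] with x hx
        exact hsupp i (θ j) (hj.trans_le hθ.le_apply) x hx
      exact h2
    set B : ℕ → Set 𝕋 := fun j => {x | ∃ c ∈ n • C j, dist x c ≤ n * ε j} with hB
    have hBm : ∀ j, MeasurableSet (B j) := by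
      intro j
      have : B j = ⋃ c ∈ n • C j, Metric.closedBall c (n * ε j) := by ext; simp [hB]
      rw [this]
      exact Finset.measurableSet_biUnion _ fun _ _ => Metric.isClosed_closedBall.measurableSet
    have hBc : ∀ j, convPow (σ : Measure 𝕋) n (B j)ᶜ = 0 := fun j =>
      convPow_concentrated _ (C j) (ε j) (hconc j) n
    have hBv : ∀ j, volume (B j) ≤ ENNReal.ofReal (1 / ((j : ℝ) + 1)) := by
      intro j
      refine (volume_nbhd_le _ _).trans ?_
      calc ((n • C j).card : ℝ≥0∞) * ENNReal.ofReal (2 * (n * ε j))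
          ≤ ENNReal.ofReal (((C j).card : ℝ) ^ n) * ENNReal.ofReal (2 * (n * ε j)) := by
            gcongr
            rw [← Nat.cast_pow, ENNReal.ofReal_natCast]
            exact_mod_cast Finset.card_nsmul_le
        _ ≤ _ := by
            rw [← ENNReal.ofReal_mul (by positivity)]
            exact ENNReal.ofReal_le_ofReal (hC j)
    refine ⟨(⋂ j, B j)ᶜ, (MeasurableSet.iInter hBm).compl, ?_, ?_⟩
    · rw [Set.compl_iInter]
      exact measure_iUnion_null hBc
    · rw [compl_compl]
      refine le_antisymm ?_ zero_le
      have h0 : Tendsto (fun j : ℕ => ENNReal.ofReal (1 / ((j : ℝ) + 1))) atTop (𝓝 0) := by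
        rw [← ENNReal.ofReal_zero]
        exact ENNReal.tendsto_ofReal tendsto_one_div_add_atTop_nhds_zero_nat
      exact ge_of_tendsto' h0 fun j => (measure_mono (Set.iInter_subset B j)).trans (hBv j)
  · -- the uniform `ℓ^{2(n+1)}` bound passes to `σ`, and says that `σ^{*(n+1)}` has `ℓ²` coefficients
    refine absolutelyContinuous_of_summable_sq _ ?_
    simp_rw [integral_fourier_convPow, norm_pow, ← pow_mul]
    refine summable_of_sum_le (c := 4 ^ (2 * (n + 1))) (fun k => by positivity) fun s => ?_
    have hk : ∀ k : ℤ, Tendsto (fun j => ∫ x, fourier k x ∂(P (θ j) : Measure 𝕋)) atTop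
        (𝓝 (∫ x, fourier k x ∂(σ : Measure 𝕋))) := fun k =>
      (ProbabilityMeasure.tendsto_iff_forall_integral_rclike_tendsto ℂ).mp hlim
        (BoundedContinuousFunction.mkOfCompact (fourier k))
    rw [mul_comm (n + 1) 2]
    exact le_of_tendsto' (tendsto_finsetSum s fun k _ => ((hk k).norm.pow _))
      fun j => hPs (θ j) s
end

section
/- Let σ be a probability measure on the circle ℝ/ℤ and let 1 ≤ k ≤ n be natural numbers. If the n-fold convolution power σ^{*n} is mutually singular with the Haar probability measure, then the k-fold convolution power σ^{*k} is also mutually singular with the Haar probability measure. -/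
/-!
It suffices to show that singularity of `μ ∗ σ` with respect to Haar measure forces that of `μ`,
and then to descend from `n` to `k` one factor at a time. If `μ ∗ σ` vanishes on `S` and Haar
measure vanishes on `Sᶜ`, then by Fubini the translate `{x | y + x ∈ S}` is `μ`-null for
`σ`-almost every `y`. Since `σ ≠ 0`, one such `y` exists, and by translation invariance the
complement of this single translate is Haar-null, so the translate separates `μ` from Haar measure.
-/

open MeasureTheory

instance isProbabilityMeasure_convPow (σ : Measure (AddCircle (1 : ℝ))) [IsProbabilityMeasure σ]
    (k : ℕ) : IsProbabilityMeasure (convPow σ k) := by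
  induction k with
  | zero => exact Measure.dirac.isProbabilityMeasure
  | succ k ih => exact Measure.probabilitymeasure_of_probabilitymeasures_conv _ _

lemma mutuallySingular_of_conv (μ σ : Measure (AddCircle (1 : ℝ)))
    [IsProbabilityMeasure μ] [IsProbabilityMeasure σ]
    (h : (μ.conv σ) ⟂ₘ (volume : Measure (AddCircle (1 : ℝ)))) :
    μ ⟂ₘ (volume : Measure (AddCircle (1 : ℝ))) := by
  obtain ⟨S, hS, hμS, hvS⟩ := h
  have hadd : Measurable fun z : AddCircle (1 : ℝ) × AddCircle (1 : ℝ) ↦ z.1 + z.2 := by fun_prop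
  -- Commuting the factors makes `σ` the outer measure in Fubini.
  rw [Measure.conv_comm, Measure.conv, Measure.map_apply hadd hS,
    Measure.measure_prod_null (hadd hS)] at hμS
  obtain ⟨y, hy⟩ := hμS.exists
  refine ⟨(fun x ↦ y + x) ⁻¹' S, (measurable_const_add y) hS, hy, ?_⟩
  rw [← Set.preimage_compl, measure_preimage_add, hvS]

/-- If `σ` is a probability measure on the circle, `1 ≤ k ≤ n`, and the convolution power
`σ^{*n}` is mutually singular with Haar measure, then so is `σ^{*k}`. -/
theorem convPow_mutuallySingular_of_le
    (σ : Measure (AddCircle (1 : ℝ))) [IsProbabilityMeasure σ]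
    (k n : ℕ) (hk : 1 ≤ k) (hkn : k ≤ n)
    (hsing : (convPow σ n) ⟂ₘ (volume : Measure (AddCircle (1 : ℝ)))) :
    (convPow σ k) ⟂ₘ (volume : Measure (AddCircle (1 : ℝ))) := by
  induction n, hkn using Nat.le_induction with
  | base => exact hsing
  | succ m _ ih => exact ih (mutuallySingular_of_conv _ σ hsing)
end

section
/- Let H be a complex Hilbert space, U : H → H a unitary operator (linear isometric equivalence), p ≥ 2 a natural number, and F ∈ H a vector whose orbit span is cyclic, i.e. the closed linear span of {U^n F : n ∈ ℤ} equals H. Suppose (P_k) is a sequence of polynomials with real coefficients such that ‖P_k(U^{-1})F − F‖ → 0 and ‖P_k(U^p)F‖ → 0 as k → ∞. Then every continuous linear operator J : H → H satisfying J ∘ U = U^p ∘ J is the zero operator. In particular, U and U^p are spectrally disjoint. -/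
open Filter Topology Polynomial

/-!
Polynomials in `U` move freely past powers of `U`, and `J U = U ^ p J` gives
`J Q(U⁻¹) = Q(U ^ (-p)) J`; for a real polynomial `Q`, the adjoint of `Q(U ^ (-p))` is `Q(U ^ p)`.
Hence for all integers `n`, `m`
`⟪J Uⁿ Pₖ(U⁻¹) F, Uᵐ F⟫ = ⟪Pₖ(U ^ (-p)) J Uⁿ F, Uᵐ F⟫ = ⟪J Uⁿ F, Uᵐ Pₖ(U ^ p) F⟫`.
As `k → ∞` the left side tends to `⟪J Uⁿ F, Uᵐ F⟫` and the right side to `0`, so all these matrix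
coefficients of `J` vanish, and cyclicity of `F` forces `J = 0`.
-/

/-- If `T A = B T`, then `T Q(A) = Q(B) T` for every polynomial `Q`; used both for `T = J` and for
`T` a power of `U`. -/
lemma aeval_intertwine {H : Type*} [NormedAddCommGroup H] [InnerProductSpace ℂ H]
    {T A B : H →L[ℂ] H} (h : ∀ x, T (A x) = B (T x)) (Q : Polynomial ℂ) (x : H) :
    T (aeval A Q x) = aeval B Q (T x) := by
  have hpow : ∀ (n : ℕ) (x : H), T (A^[n] x) = B^[n] (T x) := by
    intro n
    induction n with
    | zero => intro x; simp
    | succ n ih => intro x; rw [Function.iterate_succ_apply, Function.iterate_succ_apply, ih, h]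
  induction Q using Polynomial.induction_on' with
  | add q r hq hr => simp [hq, hr]
  | monomial n a => simp [aeval_monomial, Algebra.algebraMap_eq_smul_one, hpow]

/-- If `B` is a formal adjoint of `A` and `Q` has real coefficients, then `Q(B)` is a formal
adjoint of `Q(A)`. -/
lemma inner_aeval_real {H : Type*} [NormedAddCommGroup H] [InnerProductSpace ℂ H]
    {A B : H →L[ℂ] H} (h : ∀ x y, inner ℂ (A x) y = inner ℂ x (B y)) (Q : Polynomial ℝ) (x y : H) :
    inner ℂ (aeval A (Q.map (algebraMap ℝ ℂ)) x) y
      = inner ℂ x (aeval B (Q.map (algebraMap ℝ ℂ)) y) := by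
  have hpow : ∀ (n : ℕ) (x y : H), inner ℂ (A^[n] x) y = inner ℂ x (B^[n] y) := by
    intro n
    induction n with
    | zero => intro x y; simp
    | succ n ih =>
      intro x y
      rw [Function.iterate_succ_apply, Function.iterate_succ_apply', ih, h]
  induction Q using Polynomial.induction_on' with
  | add q r hq hr =>
    rw [Polynomial.map_add, map_add, map_add, add_apply, add_apply, inner_add_left,
      inner_add_right, hq, hr]
  | monomial n a =>
    simp [aeval_monomial, Algebra.algebraMap_eq_smul_one, hpow]

/-- For a unitary `U` on a complex Hilbert space `H` with a cyclic vector `F`, if there are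
real polynomials `P k` with `P k (U⁻¹) F → F` and `P k (U^p) F → 0` (`p ≥ 2`), then every
bounded operator `J` intertwining `U` and `U^p` (i.e. `J U = U^p J`) vanishes: `U` and `U^p`
are spectrally disjoint. -/
theorem intertwiner_eq_zero_of_polynomial_approx
    {H : Type*} [NormedAddCommGroup H] [InnerProductSpace ℂ H] [CompleteSpace H]
    (U : H ≃ₗᵢ[ℂ] H) (p : ℕ) (hp : 2 ≤ p) (F : H)
    (hcyclic :
      (Submodule.span ℂ (Set.range fun n : ℤ => (U ^ n) F)).topologicalClosure = ⊤)
    (P : ℕ → Polynomial ℝ)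
    (hP1 : Tendsto
      (fun k => ‖(Polynomial.aeval
          ((U.symm.toContinuousLinearEquiv : H ≃L[ℂ] H) : H →L[ℂ] H)
          ((P k).map (algebraMap ℝ ℂ))) F - F‖) atTop (𝓝 0))
    (hP2 : Tendsto
      (fun k => ‖(Polynomial.aeval
          ((((U.toContinuousLinearEquiv : H ≃L[ℂ] H) : H →L[ℂ] H)) ^ p)
          ((P k).map (algebraMap ℝ ℂ))) F‖) atTop (𝓝 0))
    (J : H →L[ℂ] H)
    (hJ : J.comp ((U.toContinuousLinearEquiv : H ≃L[ℂ] H) : H →L[ℂ] H)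
        = ((((U.toContinuousLinearEquiv : H ≃L[ℂ] H) : H →L[ℂ] H)) ^ p).comp J) :
    J = 0 := by
  set V : H →L[ℂ] H := ((U.toContinuousLinearEquiv : H ≃L[ℂ] H) : H →L[ℂ] H) with hV
  set W : H →L[ℂ] H := ((U.symm.toContinuousLinearEquiv : H ≃L[ℂ] H) : H →L[ℂ] H) with hW
  have hVW : V * W = 1 := by ext x; simp [hV, hW]
  have hWV : W * V = 1 := by ext x; simp [hV, hW]
  have hcomm : Commute W V := hWV.trans hVW.symm
  have hWVp : W ^ p * V ^ p = 1 := by rw [← hcomm.mul_pow, hWV, one_pow]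
  -- The inverse form `J U⁻¹ = U ^ (-p) J` of the intertwining relation.
  have hJW : ∀ x, J (W x) = (W ^ p) (J x) := by
    have hJ' : J * V = V ^ p * J := hJ
    have : J * W = W ^ p * J := by
      calc J * W = (W ^ p * V ^ p) * J * W := by rw [hWVp, one_mul]
        _ = W ^ p * (V ^ p * J) * W := by simp only [mul_assoc]
        _ = W ^ p * J * (V * W) := by rw [← hJ']; simp only [mul_assoc]
        _ = W ^ p * J := by rw [hVW, mul_one]
    intro x
    exact DFunLike.congr_fun this x
  have hadj : ∀ x y, inner ℂ (W x) y = inner ℂ x (V y) := by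
    intro x y
    have := U.inner_map_map (U.symm x) y
    simpa [hV, hW] using this.symm
  have hadjp : ∀ x y, inner ℂ ((W ^ p) x) y = inner ℂ x ((V ^ p) y) := by
    intro x y
    simpa using inner_aeval_real hadj (X ^ p) x y
  let Z : ℤ → H →L[ℂ] H := fun n => (((U ^ n).toContinuousLinearEquiv : H ≃L[ℂ] H) : H →L[ℂ] H)
  have hZ : ∀ n x, Z n x = (U ^ n) x := fun n x => rfl
  have hZW : ∀ n x, Z n (W x) = W (Z n x) := by
    intro n x
    have h : U ^ n * U⁻¹ = U⁻¹ * U ^ n := ((Commute.refl U).zpow_left n).inv_right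
    exact DFunLike.congr_fun h x
  have hZV : ∀ n x, Z n (V x) = V (Z n x) := by
    intro n x
    have h : U ^ n * U = U * U ^ n := (Commute.refl U).zpow_left n
    exact DFunLike.congr_fun h x
  have hZVp : ∀ n x, Z n ((V ^ p) x) = (V ^ p) (Z n x) := by
    intro n x
    simpa using aeval_intertwine (hZV n) (X ^ p) x
  have h1 := tendsto_iff_norm_sub_tendsto_zero.2 hP1
  have h2 := tendsto_zero_iff_norm_tendsto_zero.2 hP2
  have key : ∀ n m : ℤ, inner ℂ (J (Z n F)) (Z m F) = 0 := by
    intro n m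
    have l1 := (((J.comp (Z n)).continuous.tendsto F).comp h1).inner
      (tendsto_const_nhds (x := Z m F)) (𝕜 := ℂ)
    have l2 := (tendsto_const_nhds (x := J (Z n F))).inner
      (((Z m).continuous.tendsto 0).comp h2) (𝕜 := ℂ)
    rw [map_zero, inner_zero_right] at l2
    refine tendsto_nhds_unique l1 (l2.congr fun k => ?_)
    simp only [Function.comp_apply, ContinuousLinearMap.comp_apply]
    rw [aeval_intertwine (hZW n), aeval_intertwine hJW, inner_aeval_real hadjp,
      aeval_intertwine (hZVp m)]
  have hdense : Dense (Submodule.span ℂ (Set.range fun n : ℤ => (U ^ n) F) : Set H) :=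
    Submodule.dense_iff_topologicalClosure_eq_top.2 hcyclic
  have hJZ : ∀ n : ℤ, J (Z n F) = 0 := by
    intro n
    refine hdense.eq_zero_of_inner_left (𝕜 := ℂ) fun v hv => ?_
    induction hv using Submodule.span_induction with
    | mem x hx => obtain ⟨m, rfl⟩ := hx; exact key n m
    | zero => simp
    | add x y _ _ hx hy => rw [inner_add_right, hx, hy, add_zero]
    | smul a x _ hx => rw [inner_smul_right, hx, mul_zero]
  refine ContinuousLinearMap.ext_on hdense ?_
  rintro _ ⟨n, rfl⟩
  exact hJZ n
end

section
/- Let σ be a finite Borel measure on the circle ℝ/ℤ and let (n_k) be a strictly increasing sequence of natural numbers. Suppose that for every Borel set B ⊆ ℝ/ℤ, ∫_B e^{2πi n_k x} dσ(x) → σ(B)/2 as k → ∞. Then σ is mutually singular with the Haar (Lebesgue) measure on the circle. -/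
/-!
Let `S` be a conull set for Lebesgue measure on which the singular part of `σ` vanishes. On `S` the
measure `σ` is absolutely continuous with density `f = dσ/dx`, so `∫_S e^{2πi n_k x} dσ` is the
integral of `f(x) e^{2πi n_k x}` over the circle, which tends to `0` by the Riemann–Lebesgue lemma
(`tendsto_integral_smul_fourier`). By hypothesis it also tends to `σ(S)/2`, hence `σ(S) = 0`, and
`S` witnesses the mutual singularity.
-/

open MeasureTheory Filter Topology

/-- The Riemann–Lebesgue lemma on the circle as the frequency tends to `+∞`, deduced from the one on
`ℝ` by lifting `f` to the fundamental domain `(0, 1]` and extending by zero. No integrability is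
assumed, since both integrals take the value `0` otherwise. -/
theorem tendsto_integral_smul_fourier (f : AddCircle (1 : ℝ) → ℝ) :
    Tendsto (fun m : ℕ => ∫ x, f x • fourier (m : ℤ) x) atTop (𝓝 (0 : ℂ)) := by
  have hRL := Real.tendsto_integral_exp_smul_cocompact
    ((Set.Ioc (0 : ℝ) (0 + 1)).indicator fun v => ((f (v : AddCircle (1 : ℝ)) : ℝ) : ℂ))
  have hm : Tendsto (fun m : ℕ => -(m : ℝ)) atTop (cocompact ℝ) :=
    (tendsto_neg_atTop_atBot.comp tendsto_natCast_atTop_atTop).mono_right atBot_le_cocompact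
  refine (hRL.comp hm).congr fun m => ?_
  rw [← AddCircle.integral_preimage (1 : ℝ) 0, ← integral_indicator measurableSet_Ioc]
  refine integral_congr_ae (Eventually.of_forall fun v => ?_)
  by_cases hv : v ∈ Set.Ioc (0 : ℝ) (0 + 1)
  · simp only [Set.indicator_of_mem hv, Circle.smul_def, Real.fourierChar_apply,
      fourier_coe_apply, smul_eq_mul, Complex.real_smul]
    rw [mul_comm]
    congr 2
    push_cast
    ring
  · simp only [Set.indicator_of_notMem hv, smul_zero]

/-- If for a finite measure `σ` on the circle there is a strictly increasing sequence
`n k` such that `∫_B e^{2πi n_k x} dσ(x) → σ(B)/2` for every Borel set `B`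
(the weak convergence `U^{n_k} → I/2`), then `σ` is singular with respect to
the Haar (Lebesgue) measure on the circle. -/
theorem mutuallySingular_of_tendsto_half
    (σ : Measure (AddCircle (1 : ℝ))) [IsFiniteMeasure σ]
    (n : ℕ → ℕ) (hmono : StrictMono n)
    (hconv : ∀ B : Set (AddCircle (1 : ℝ)), MeasurableSet B →
      Tendsto (fun k => ∫ x in B, fourier ((n k : ℤ)) x ∂σ) atTop
        (𝓝 (((σ B).toReal / 2 : ℂ)))) :
    σ ⟂ₘ (volume : Measure (AddCircle (1 : ℝ))) := by
  obtain ⟨S, hS, hsing, hvol⟩ := σ.mutuallySingular_singularPart volume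
  have hac : (volume.withDensity (σ.rnDeriv volume)) Sᶜ = 0 :=
    withDensity_absolutelyContinuous _ _ hvol
  have hrestrict : σ.restrict S = volume.withDensity (σ.rnDeriv volume) := by
    conv_lhs => rw [σ.haveLebesgueDecomposition_add volume]
    rw [Measure.restrict_add, Measure.restrict_eq_zero.2 hsing, zero_add]
    exact Measure.restrict_eq_self_of_ae_mem hac
  have hlim := (tendsto_integral_smul_fourier fun x => (σ.rnDeriv volume x).toReal).comp
    hmono.tendsto_atTop
  have hzero : Tendsto (fun k => ∫ x in S, fourier ((n k : ℤ)) x ∂σ) atTop (𝓝 0) := by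
    refine hlim.congr fun k => ?_
    rw [hrestrict, integral_withDensity_eq_integral_toReal_smul (σ.measurable_rnDeriv volume)
      (σ.rnDeriv_lt_top volume)]
    rfl
  have hhalf := tendsto_nhds_unique (hconv S hS) hzero
  refine ⟨S, hS, ?_, hvol⟩
  simpa [ENNReal.toReal_eq_zero_iff] using hhalf
end

section
/- Let (X, μ) be a measure space, let S and T be measurable measure-preserving bijections of X (measurable equivalences with measurable inverses, preserving μ), and let D be a measurable set with Σ_{n=1}^∞ μ(S^n D ∩ T^n D) < μ(D). Then there exists a measurable set D' ⊆ D with μ(D') > 0 such that S^n D' ∩ T^n D' = ∅ for every n ≥ 1. -/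
open MeasureTheory

/-!
Remove from `D` the bad set `B = ⋃_{n ≥ 1} S⁻ⁿ(SⁿD ∩ TⁿD)`. Since `S` preserves `μ`, countable
subadditivity gives `μ B ≤ ∑ μ(SⁿD ∩ TⁿD) < μ D`, so `D' = D \ B` has positive measure. A point of
`SⁿD' ∩ TⁿD'` lies in `SⁿD ∩ TⁿD`, so its `S`-preimage of order `n` in `D'` would lie in `B`.
-/

theorem measurableSet_iterate_image {X : Type*} [MeasurableSpace X] (S : X ≃ᵐ X)
    {D : Set X} (hD : MeasurableSet D) (n : ℕ) : MeasurableSet ((⇑S)^[n] '' D) := by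
  induction n with
  | zero => simpa using hD
  | succ k ih =>
    rw [Function.iterate_succ', Set.image_comp]
    exact S.measurableSet_image.2 ih

/-- If `S, T` are measure-preserving measurable bijections and `D` is a measurable set with
`∑_{n ≥ 1} μ(SⁿD ∩ TⁿD) < μ(D)`, then there is a positive-measure measurable subset
`D' ⊆ D` with `SⁿD' ∩ TⁿD' = ∅` for all `n ≥ 1`. -/
theorem exists_subset_iterates_disjoint
    {X : Type*} [MeasurableSpace X] (μ : Measure X)
    (S T : X ≃ᵐ X)
    (hS : MeasurePreserving S μ μ) (hT : MeasurePreserving T μ μ)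
    (D : Set X) (hD : MeasurableSet D)
    (hsum : (∑' n : ℕ, μ ((⇑S)^[n + 1] '' D ∩ (⇑T)^[n + 1] '' D)) < μ D) :
    ∃ D' : Set X, D' ⊆ D ∧ MeasurableSet D' ∧ 0 < μ D' ∧
      ∀ n : ℕ, 1 ≤ n → (⇑S)^[n] '' D' ∩ (⇑T)^[n] '' D' = ∅ := by
  have hE (n : ℕ) : MeasurableSet ((⇑S)^[n + 1] '' D ∩ (⇑T)^[n + 1] '' D) :=
    (measurableSet_iterate_image S hD _).inter (measurableSet_iterate_image T hD _)
  set B : Set X := ⋃ n : ℕ, (⇑S)^[n + 1] ⁻¹' ((⇑S)^[n + 1] '' D ∩ (⇑T)^[n + 1] '' D)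
  have hBm : MeasurableSet B :=
    MeasurableSet.iUnion fun n => (hS.iterate (n + 1)).measurable (hE n)
  have hBlt : μ B < μ D := by
    refine lt_of_le_of_lt (measure_iUnion_le _) ?_
    simpa only [(hS.iterate _).measure_preimage (hE _).nullMeasurableSet] using hsum
  refine ⟨D \ B, Set.sdiff_subset, hD.diff hBm,
    (tsub_pos_of_lt hBlt).trans_le le_measure_sdiff, fun n hn => ?_⟩
  obtain ⟨k, rfl⟩ : ∃ k, n = k + 1 := ⟨n - 1, by omega⟩
  rw [Set.eq_empty_iff_forall_notMem]
  rintro _ ⟨⟨x, ⟨hxD, hxB⟩, rfl⟩, ⟨y, ⟨hyD, -⟩, hy⟩⟩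
  exact hxB (Set.mem_iUnion.2 ⟨k, ⟨x, hxD, rfl⟩, ⟨y, hyD, hy⟩⟩)
end

section
/- Let (X, μ) be a measure space, let S and T be measurable measure-preserving bijections of X, and let D be a measurable set with μ(D) > 0 and Σ_{n=1}^∞ μ(S^n D ∩ T^n D) < ∞. Then there exist a natural number p ≥ 1 and a measurable set D' ⊆ D with μ(D') > 0 such that S^{pn} D' ∩ T^{pn} D' = ∅ for every n ≥ 1. -/
open MeasureTheory

/-!
The set `D'` is obtained from `D` by deleting, for every `n ≥ 1`, the points whose image under
`S^{pn}` lies in `S^{pn} D ∩ T^{pn} D`. Disjointness is then immediate. Since `S` preserves `μ`,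
the deleted set has measure at most `∑_{n ≥ 1} μ(S^{pn} D ∩ T^{pn} D)`, which is bounded by the
tail `∑_{k ≥ p} μ(S^k D ∩ T^k D)` of a convergent series, hence is less than `μ D` for large `p`.
-/

theorem measurableEmbedding_iterate {X : Type*} [MeasurableSpace X] (S : X ≃ᵐ X) (k : ℕ) :
    MeasurableEmbedding (⇑S)^[k] := by
  induction k with
  | zero => exact MeasurableEmbedding.id
  | succ k ih => exact ih.comp S.measurableEmbedding

/-- If `∑ f` is finite, the sum of `f` along the progression `i, i + p, i + 2p, …` with
`p = i + 1` is smaller than a given `c > 0` for some `i`. With `f n = a (n + 1)` these are the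
terms `a p, a (2p), …`. -/
theorem exists_tsum_progression_lt (f : ℕ → ENNReal) (hf : ∑' n, f n < ⊤) {c : ENNReal}
    (hc : 0 < c) : ∃ i : ℕ, ∑' n, f ((i + 1) * n + i) < c := by
  obtain ⟨i, hi⟩ := ((ENNReal.tendsto_sum_nat_add f hf.ne).eventually_lt_const hc).exists
  refine ⟨i, lt_of_le_of_lt ?_ hi⟩
  exact ENNReal.tsum_comp_le_tsum_of_injective
    (mul_right_injective₀ (Nat.succ_ne_zero i)) (fun n => f (n + i))

/-- If `S, T` are measure-preserving measurable bijections and `D` is a measurable set of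
positive measure with `∑_{n ≥ 1} μ(SⁿD ∩ TⁿD) < ∞`, then there are `p ≥ 1` and a
positive-measure measurable subset `D' ⊆ D` with `S^{pn}D' ∩ T^{pn}D' = ∅` for all `n ≥ 1`. -/
theorem exists_pow_subset_iterates_disjoint
    {X : Type*} [MeasurableSpace X] (μ : Measure X)
    (S T : X ≃ᵐ X)
    (hS : MeasurePreserving S μ μ) (hT : MeasurePreserving T μ μ)
    (D : Set X) (hD : MeasurableSet D) (hDpos : 0 < μ D)
    (hsum : (∑' n : ℕ, μ ((⇑S)^[n + 1] '' D ∩ (⇑T)^[n + 1] '' D)) < ⊤) :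
    ∃ p : ℕ, 1 ≤ p ∧ ∃ D' : Set X, D' ⊆ D ∧ MeasurableSet D' ∧ 0 < μ D' ∧
      ∀ n : ℕ, 1 ≤ n → (⇑S)^[p * n] '' D' ∩ (⇑T)^[p * n] '' D' = ∅ := by
  obtain ⟨i, hi⟩ := exists_tsum_progression_lt _ hsum hDpos
  let A : ℕ → Set X := fun k => (⇑S)^[k] '' D ∩ (⇑T)^[k] '' D
  let E : ℕ → Set X := fun n => (⇑S)^[(i + 1) * n + i + 1] ⁻¹' A ((i + 1) * n + i + 1)
  have hA : ∀ k, MeasurableSet (A k) := fun k =>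
    ((measurableEmbedding_iterate S k).measurableSet_image' hD).inter
      ((measurableEmbedding_iterate T k).measurableSet_image' hD)
  have hE : MeasurableSet (⋃ n, E n) := MeasurableSet.iUnion fun n =>
    (measurableEmbedding_iterate S _).measurable (hA _)
  have hμE : μ (⋃ n, E n) < μ D := by
    refine lt_of_le_of_lt (measure_iUnion_le E) (lt_of_eq_of_lt (tsum_congr fun n => ?_) hi)
    exact (hS.iterate _).measure_preimage (hA _).nullMeasurableSet
  refine ⟨i + 1, Nat.succ_pos i, D \ ⋃ n, E n, Set.sdiff_subset, hD.diff hE, ?_, ?_⟩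
  · exact lt_of_lt_of_le (tsub_pos_of_lt hμE) le_measure_sdiff
  · intro n hn
    obtain ⟨m, rfl⟩ := Nat.exists_eq_add_of_le' hn
    rw [Set.eq_empty_iff_forall_notMem]
    rintro _ ⟨⟨x, hx, rfl⟩, y, hy, hxy⟩
    refine hx.2 (Set.mem_iUnion.2 ⟨m, ?_⟩)
    have hk : (i + 1) * m + i + 1 = (i + 1) * (m + 1) := by ring
    change (⇑S)^[(i + 1) * m + i + 1] x ∈ A ((i + 1) * m + i + 1)
    rw [hk]
    exact ⟨⟨x, hx.1, rfl⟩, y, hy.1, hxy⟩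
end

section
/- Let (X, μ) be a σ-finite measure space and let T and R be measurable measure-preserving bijections of X. Assume μ({x : R x ≠ x}) < ∞, and assume that for all measurable sets A, B of finite measure μ(T^n A ∩ B) → 0 as n → ∞. Then for every measurable set A with μ(A) < ∞, the measure of the symmetric difference μ((T^{-n} ∘ R ∘ T^n)(A) Δ A) tends to 0 as n → ∞. -/
/-! Put `C = Tⁿ A` and let `B` be a measurable set of finite measure containing the support
`{x | R x ≠ x}`. A point of `R C ∆ C` is either `R c` with `c ∈ C` moved by `R`, or a point of
`C` moved by `R`; hence `R C ∆ C ⊆ R (C ∩ B) ∪ (C ∩ B)`. Pulling back by `Tⁿ` and using that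
`T` and `R` preserve `μ` gives `μ ((T⁻ⁿ R Tⁿ) A ∆ A) ≤ 2 μ (Tⁿ A ∩ B)`, which tends to `0`. -/

open MeasureTheory Filter Topology symmDiff

/-- If `T` is a measure-preserving bijection of a σ-finite measure space with
`μ(TⁿA ∩ B) → 0` for all finite-measure sets `A, B`, and `R` is a measure-preserving
bijection moving only a set of finite measure, then `R` is homoclinic for `T`:
`μ((T⁻ⁿ R Tⁿ)(A) Δ A) → 0` for every finite-measure set `A`. -/
theorem homoclinic_conjugates_tendsto_id
    {X : Type*} [MeasurableSpace X] (μ : Measure X) [SigmaFinite μ]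
    (T R : X ≃ᵐ X)
    (hT : MeasurePreserving T μ μ) (hR : MeasurePreserving R μ μ)
    (hRfin : μ {x | R x ≠ x} < ⊤)
    (hmix : ∀ A B : Set X, MeasurableSet A → MeasurableSet B → μ A < ⊤ → μ B < ⊤ →
      Tendsto (fun n : ℕ => μ ((⇑T)^[n] '' A ∩ B)) atTop (𝓝 0)) :
    ∀ A : Set X, MeasurableSet A → μ A < ⊤ →
      Tendsto (fun n : ℕ => μ ((((⇑T.symm)^[n] ∘ ⇑R ∘ (⇑T)^[n]) '' A) ∆ A))
        atTop (𝓝 0) := by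
  intro A hA hAfin
  -- The support of `R` need not be measurable, so it is replaced by its measurable hull.
  set B := toMeasurable μ {x | R x ≠ x} with hB
  have hBm : MeasurableSet B := measurableSet_toMeasurable _ _
  have hBfin : μ B < ⊤ := by rwa [hB, measure_toMeasurable]
  have hsupp : ∀ x, R x ≠ x → x ∈ B := fun x hx => subset_toMeasurable μ _ hx
  have hlim : Tendsto (fun n : ℕ => μ ((⇑T)^[n] '' A ∩ B) + μ ((⇑T)^[n] '' A ∩ B))
      atTop (𝓝 0) := by
    simpa using (hmix A B hA hBm hAfin hBfin).add (hmix A B hA hBm hAfin hBfin)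
  refine tendsto_of_tendsto_of_tendsto_of_le_of_le tendsto_const_nhds hlim
    (fun _ => zero_le) (fun n => ?_)
  have hleft : Function.LeftInverse (⇑T.symm)^[n] (⇑T)^[n] :=
    Function.LeftInverse.iterate T.symm_apply_apply n
  have hright : Function.RightInverse (⇑T.symm)^[n] (⇑T)^[n] :=
    Function.LeftInverse.iterate T.apply_symm_apply n
  set D := (⇑T)^[n] '' A ∩ B with hD
  have hDm : MeasurableSet D := by
    rw [hD, Set.image_eq_preimage_of_inverse hleft hright]
    exact ((T.symm.measurable.iterate n) hA).inter hBm
  have hRD : MeasurableSet (R '' D) := R.measurableSet_image.2 hDm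
  have hsub : (((⇑T.symm)^[n] ∘ ⇑R ∘ (⇑T)^[n]) '' A) ∆ A ⊆ (⇑T)^[n] ⁻¹' (R '' D ∪ D) := by
    rintro y (⟨⟨a, ha, rfl⟩, hy⟩ | ⟨hyA, hy⟩)
    · left
      simp only [Function.comp_apply] at hy ⊢
      rw [hright]
      refine ⟨_, ⟨⟨a, ha, rfl⟩, hsupp _ fun h => hy ?_⟩, rfl⟩
      rwa [h, hleft]
    · right
      refine ⟨⟨y, hyA, rfl⟩, hsupp _ fun h => hy ⟨y, hyA, ?_⟩⟩
      simp only [Function.comp_apply]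
      rw [h, hleft]
  have hRmeas : μ (R '' D) = μ D := by
    rw [← hR.measure_preimage hRD.nullMeasurableSet, Set.preimage_image_eq _ R.injective]
  calc _ ≤ μ ((⇑T)^[n] ⁻¹' (R '' D ∪ D)) := measure_mono hsub
    _ = μ (R '' D ∪ D) := (hT.iterate n).measure_preimage (hRD.union hDm).nullMeasurableSet
    _ ≤ μ (R '' D) + μ D := measure_union_le _ _
    _ = μ D + μ D := by rw [hRmeas]
end

section
/- Let (X, μ) be a σ-finite measure space and let T and R be measurable measure-preserving bijections of X with μ({x : R x ≠ x}) < ∞. Assume that for all measurable sets A, B of finite measure μ(T^n A ∩ B) → 0 as n → ∞. Let D be a measurable set of finite measure with μ(R D ∩ D) = 0, and set S = R^{-1} ∘ T ∘ R. Then μ(S^n D ∩ T^n D) → 0 as n → ∞. -/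
open MeasureTheory Filter Topology

/-! Since `Sⁿ = R⁻¹ Tⁿ R`, a point `y = Tⁿ d = Sⁿ d'` of `SⁿD ∩ TⁿD` satisfies `R y = Tⁿ (R d')`.
If `R y = y`, injectivity of `Tⁿ` gives `d = R d'`, so `y` lies in the null set `Tⁿ(RD ∩ D)`;
otherwise `y` lies in `TⁿD ∩ {R ≠ id}`. The measure of the latter tends to `0` by the mixing
hypothesis, because `{R ≠ id}` has finite measure. This is the pointwise form of the convergence of
`T⁻ⁿ R Tⁿ` to the identity. -/

/-- Let `T, R` be measure-preserving bijections of a σ-finite measure space such that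
`R` moves only a set of finite measure and `μ(TⁿA ∩ B) → 0` for all finite-measure
sets `A, B`. If `D` has finite measure and `μ(RD ∩ D) = 0`, then for `S = R⁻¹ T R`
one has `μ(SⁿD ∩ TⁿD) → 0`. -/
theorem measure_iterates_inter_tendsto_zero
    {X : Type*} [MeasurableSpace X] (μ : Measure X) [SigmaFinite μ]
    (T R : X ≃ᵐ X)
    (hT : MeasurePreserving T μ μ) (hR : MeasurePreserving R μ μ)
    (hRfin : μ {x | R x ≠ x} < ⊤)
    (hmix : ∀ A B : Set X, MeasurableSet A → MeasurableSet B → μ A < ⊤ → μ B < ⊤ →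
      Tendsto (fun n : ℕ => μ ((⇑T)^[n] '' A ∩ B)) atTop (𝓝 0))
    (D : Set X) (hD : MeasurableSet D) (hDfin : μ D < ⊤)
    (hRD : μ (⇑R '' D ∩ D) = 0)
    (S : X → X) (hSdef : S = ⇑R.symm ∘ ⇑T ∘ ⇑R) :
    Tendsto (fun n : ℕ => μ (S^[n] '' D ∩ (⇑T)^[n] '' D)) atTop (𝓝 0) := by
  have hconj : ∀ (n : ℕ) (x : X), R (S^[n] x) = (⇑T)^[n] (R x) := by
    have h : Function.Semiconj R S T := fun x => by simp [hSdef]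
    exact fun n x => h.iterate_right n x
  -- The measurable hull is used because `{x | R x ≠ x}` need not be measurable in a general space.
  have hlim := hmix D (toMeasurable μ {x | R x ≠ x}) hD (measurableSet_toMeasurable _ _) hDfin
    (by rwa [measure_toMeasurable])
  refine tendsto_of_tendsto_of_tendsto_of_le_of_le tendsto_const_nhds hlim
    (fun _ => zero_le) (fun n => ?_)
  have hnull : μ ((⇑T)^[n] '' (⇑R '' D ∩ D)) = 0 := by
    have himg : (⇑T)^[n] '' (⇑R '' D ∩ D) = (⇑T.symm)^[n] ⁻¹' (⇑R '' D ∩ D) :=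
      congrFun (Set.image_eq_preimage_of_inverse
        (Function.LeftInverse.iterate T.symm_apply_apply n)
        (Function.RightInverse.iterate T.apply_symm_apply n)) _
    rw [himg]
    exact ((hT.symm T).iterate n).quasiMeasurePreserving.preimage_null hRD
  have hsub : S^[n] '' D ∩ (⇑T)^[n] '' D ⊆
      (⇑T)^[n] '' (⇑R '' D ∩ D) ∪ (⇑T)^[n] '' D ∩ toMeasurable μ {x | R x ≠ x} := by
    rintro y ⟨⟨d', hd', hy'⟩, ⟨d, hd, hy⟩⟩
    by_cases hfix : R y = y
    · left
      have hc := hconj n d'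
      rw [hy', hfix, ← hy] at hc
      exact ⟨d, ⟨⟨d', hd', ((T.injective.iterate n) hc).symm⟩, hd⟩, hy⟩
    · exact Or.inr ⟨⟨d, hd, hy⟩, subset_toMeasurable _ _ hfix⟩
  calc _ ≤ _ := measure_mono hsub
    _ ≤ _ := measure_union_le _ _
    _ = _ := by rw [hnull, zero_add]
end

section
/- Let p, q : ℕ → ℕ be sequences with p(n+1) − p(n) → +∞ and q(n+1) − q(n) → +∞. Then there exist a probability space (X, μ), ergodic measure-preserving measurable bijections S and T of X, a measurable set C with 0 < μ(C) < 1, and strictly increasing sequences of natural numbers (N_k) and (M_k), such that the averages (1/N_k) Σ_{n=1}^{N_k} μ(S^{p(n)} C ∩ T^{q(n)} C) converge to μ(C) while the averages (1/M_k) Σ_{n=1}^{M_k} μ(S^{p(n)} C ∩ T^{q(n)} C) converge to μ(C)². In particular, the sequence (1/N) Σ_{n=1}^{N} μ(S^{p(n)} C ∩ T^{q(n)} C) diverges. -/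
/-!
The example lives on the Bernoulli space `ℤ → Bool` with the product of fair coin measures.
The transformation `S` is the shift, and `T` is the shift after the coordinates have been
relabelled by a permutation `σ` of `ℤ` with `σ 0 = 0`. Both are Bernoulli shifts, hence ergodic
(`relabelledShift_ergodic`). For `C = {x | x 0 = true}` one has
`S^m C = {x | x m = true}` and `T^m C = {x | x (σ m) = true}`, so the `n`-th term of the averages is
`1/2` if `σ (q n) = p n`, and `1/4` otherwise.

Since `p` and `q` are eventually strictly increasing, there is for every infinite set `A` of natural
numbers a permutation `σ` such that, for all large `n`, `σ (q n)` equals `p n` if `n ∈ A`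
and `-p n` otherwise (`exists_relabelling`). With `A` the union of the blocks
`[(2j)!, (2j+1)!)`, the averages up to `(2j+1)!` tend to `1/2 = μ C` and those
up to `(2j+2)!` tend to `1/4 = (μ C)²`, because each block `[k!, (k+1)!)` makes up almost all
of `[1, (k+1)!]` (`tendsto_average_of_eq_on_blocks`).
-/

open MeasureTheory Filter Topology

namespace DivergentAverages

open Set ProbabilityTheory
open scoped symmDiff Nat

/-! ### Relabelled Bernoulli shifts -/

/-- The fair coin measure. -/
noncomputable def coin : Measure Bool := (PMF.uniformOfFintype Bool).toMeasure

instance : IsProbabilityMeasure coin := by unfold coin; infer_instance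

lemma coin_true : coin {true} = 2⁻¹ := by
  simp [coin]

/-- The two-sided fair Bernoulli measure. -/
noncomputable def bern : Measure (ℤ → Bool) := Measure.infinitePi (fun _ => coin)

instance : IsProbabilityMeasure bern := by unfold bern; infer_instance

/-- The action of a permutation of the coordinates, `x ↦ x ∘ e`. -/
def permute (e : ℤ ≃ ℤ) : (ℤ → Bool) ≃ᵐ (ℤ → Bool) where
  toFun x := x ∘ e
  invFun x := x ∘ e.symm
  left_inv x := by ext; simp
  right_inv x := by ext; simp
  measurable_toFun := measurable_pi_lambda _ fun i => measurable_pi_apply (e i)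
  measurable_invFun := measurable_pi_lambda _ fun i => measurable_pi_apply (e.symm i)

lemma permute_measurePreserving (e : ℤ ≃ ℤ) : MeasurePreserving (permute e) bern bern := by
  refine ⟨(permute e).measurable, ?_⟩
  have h := Measure.infinitePi_map_piCongrLeft (fun _ : ℤ => coin) e.symm
  change Measure.map (permute e) (Measure.infinitePi fun _ => coin) = _
  refine Eq.trans ?_ h
  congr 1
  ext x i
  have := MeasurableEquiv.piCongrLeft_apply_apply (β := fun _ : ℤ => Bool) e.symm x (e i)
  simp at this
  simp [permute, this]

/-- The shift `x ↦ (i ↦ x (i - 1))`, transported along the relabelling `σ` of the coordinates. -/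
def relabelledShift (σ : ℤ ≃ ℤ) : (ℤ → Bool) ≃ᵐ (ℤ → Bool) :=
  permute ((σ.symm.trans (Equiv.subRight 1)).trans σ)

lemma relabelledShift_iterate (σ : ℤ ≃ ℤ) (m : ℕ) (x : ℤ → Bool) (i : ℤ) :
    (relabelledShift σ)^[m] x (σ i) = x (σ (i - m)) := by
  induction m generalizing i with
  | zero => simp
  | succ m ih =>
    rw [Function.iterate_succ_apply']
    change (relabelledShift σ)^[m] x (σ (σ.symm (σ i) - 1)) = _
    rw [Equiv.symm_apply_apply, ih]
    congr 2
    push_cast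
    ring

/-- Coordinates indexed by disjoint finite sets are independent. -/
lemma bern_inter_cylinder {F G : Finset ℤ} (hFG : Disjoint F G) {A : Set (F → Bool)}
    {B : Set (G → Bool)} (hA : MeasurableSet A) (hB : MeasurableSet B) :
    bern (cylinder F A ∩ cylinder G B) = bern (cylinder F A) * bern (cylinder G B) := by
  have h : iIndepFun (fun (i : ℤ) (x : ℤ → Bool) => x i) bern :=
    iIndepFun_infinitePi (P := fun _ : ℤ => coin) (X := fun _ y => y) (fun _ => measurable_id)
  exact (h.indepFun_finset F G hFG fun i => measurable_pi_apply i).measure_inter_preimage_eq_mul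
    A B hA hB

/-- Mixing of cylinder sets: far translates are exactly independent. -/
lemma exists_iterate_independent (σ : ℤ ≃ ℤ) {E : Set (ℤ → Bool)}
    (hE : E ∈ measurableCylinders fun _ : ℤ => Bool) :
    ∃ n : ℕ, bern (E ∩ (relabelledShift σ)^[n] ⁻¹' E) =
      bern E * bern ((relabelledShift σ)^[n] ⁻¹' E) := by
  classical
  obtain ⟨F, A, hA, rfl⟩ := (mem_measurableCylinders _).1 hE
  -- a translation length exceeding the spread of the finite set `σ⁻¹ F`
  obtain ⟨b, hb⟩ : ∃ b : ℤ, ∀ i ∈ F, |σ.symm i| ≤ b := by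
    obtain ⟨b, hb⟩ := (F.image fun i => |σ.symm i|).bddAbove
    exact ⟨b, fun i hi => hb (Finset.mem_coe.2 (Finset.mem_image_of_mem _ hi))⟩
  let n : ℕ := (2 * b + 1).toNat
  let τ : ℤ → ℤ := fun i => σ (σ.symm i - n)
  have hdisj : Disjoint F (F.image τ) := by
    rw [Finset.disjoint_left]
    intro i hi hi'
    obtain ⟨j, hj, hji⟩ := Finset.mem_image.1 hi'
    have h1 := abs_le.1 (hb i hi)
    have h2 := abs_le.1 (hb j hj)
    have h3 : σ.symm i = σ.symm j - n := by rw [← hji]; simp [τ]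
    omega
  let r : (F.image τ → Bool) → (F → Bool) :=
    fun y i => y ⟨τ i, Finset.mem_image_of_mem _ i.2⟩
  have hr : Measurable r := measurable_pi_lambda _ fun i => measurable_pi_apply _
  have heq : (relabelledShift σ)^[n] ⁻¹' cylinder F A = cylinder (F.image τ) (r ⁻¹' A) := by
    ext x
    have : F.restrict ((relabelledShift σ)^[n] x) = r ((F.image τ).restrict x) := by
      ext i
      have := relabelledShift_iterate σ n x (σ.symm i)
      simpa [r, τ] using this
    simp only [mem_preimage, mem_cylinder, this]
  refine ⟨n, ?_⟩
  rw [heq]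
  exact bern_inter_cylinder hdisj hA (hr hA)

lemma relabelledShift_measurePreserving (σ : ℤ ≃ ℤ) :
    MeasurePreserving (relabelledShift σ) bern bern := permute_measurePreserving _

/-- An invariant set is approximated by a cylinder `E`, and `E` is independent of one of its
translates, so that the measure `a` of the invariant set satisfies `a = a²`. -/
lemma relabelledShift_ergodic (σ : ℤ ≃ ℤ) : Ergodic (relabelledShift σ) bern := by
  refine ⟨relabelledShift_measurePreserving σ, ⟨fun A hA hinv => ?_⟩⟩
  have key : ∀ ε : ℝ, 0 < ε → |bern.real A - bern.real A * bern.real A| ≤ 0 + ε := by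
    intro ε hε
    obtain ⟨E, hE, hEA⟩ := exists_measure_symmDiff_lt_of_generateFrom_isSetRing (μ := bern)
      (isSetRing_measurableCylinders (α := fun _ : ℤ => Bool))
      ⟨{univ}, by simp,
        by simpa using univ_mem_measurableCylinders (fun _ : ℤ => Bool), by simp⟩
      generateFrom_measurableCylinders.symm hA
      (ENNReal.ofReal_pos.2 (show (0 : ℝ) < ε / 4 by positivity))
    have hEm : MeasurableSet E := .of_mem_measurableCylinders hE
    obtain ⟨n, hn⟩ := exists_iterate_independent σ hE
    have hmp := (relabelledShift_measurePreserving σ).iterate n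
    set E' := (relabelledShift σ)^[n] ⁻¹' E with hE'
    have hE'm : MeasurableSet E' := hmp.measurable hEm
    have hAn : (relabelledShift σ)^[n] ⁻¹' A = A := by
      rw [preimage_iterate_eq]
      exact Function.iterate_fixed hinv n
    have h1 : bern.real (E ∆ A) < ε / 4 := by
      rw [Measure.real]
      exact (ENNReal.lt_ofReal_iff_toReal_lt (by finiteness)).1 hEA
    have h2 : bern.real (E' ∆ A) = bern.real (E ∆ A) := by
      conv_lhs => rw [← hAn]
      exact hmp.measureReal_preimage (hEm.symmDiff hA).nullMeasurableSet
    have h3 : bern.real E' = bern.real E := hmp.measureReal_preimage hEm.nullMeasurableSet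
    have h4 : bern.real (E ∩ E') = bern.real E * bern.real E := by
      nth_rewrite 2 [← h3]
      rw [Measure.real, hn, ENNReal.toReal_mul]
      rfl
    have h5 : bern.real ((E ∩ E') ∆ A) ≤ bern.real (E ∆ A) + bern.real (E' ∆ A) := by
      refine (measureReal_mono ?_).trans (measureReal_union_le _ _)
      intro x
      simp only [mem_symmDiff, mem_inter_iff, mem_union]
      tauto
    have h6 := abs_measureReal_sub_le_measureReal_symmDiff (μ := bern)
      (hEm.inter hE'm).nullMeasurableSet hA.nullMeasurableSet
    have h7 := abs_measureReal_sub_le_measureReal_symmDiff (μ := bern)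
      hEm.nullMeasurableSet hA.nullMeasurableSet
    rw [h4] at h6
    have e0 : 0 ≤ bern.real E := measureReal_nonneg
    have e1 : bern.real E ≤ 1 := measureReal_le_one
    have a0 : 0 ≤ bern.real A := measureReal_nonneg
    have a1 : bern.real A ≤ 1 := measureReal_le_one
    have h8 : |bern.real E * bern.real E - bern.real A * bern.real A| ≤
        2 * |bern.real E - bern.real A| := by
      rw [show bern.real E * bern.real E - bern.real A * bern.real A =
        (bern.real E + bern.real A) * (bern.real E - bern.real A) by ring, abs_mul]
      gcongr
      rw [abs_of_nonneg (by positivity)]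
      linarith
    have h6' := abs_le.1 h6
    have h8' := abs_le.1 h8
    rw [abs_le]
    constructor <;> linarith
  have h0 : bern.real A - bern.real A * bern.real A = 0 :=
    abs_nonpos_iff.1 (le_of_forall_pos_le_add key)
  have h01 : bern.real A = 0 ∨ bern.real A = 1 := by
    have : bern.real A * (1 - bern.real A) = 0 := by linarith
    rcases mul_eq_zero.1 this with h | h
    · exact Or.inl h
    · exact Or.inr (by linarith)
  rw [eventuallyConst_set']
  rcases h01 with h | h
  · left
    rw [ae_eq_empty]
    simpa [Measure.real, ENNReal.toReal_eq_zero_iff] using h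
  · right
    rw [ae_eq_univ_iff_measure_eq hA.nullMeasurableSet]
    simpa [Measure.real, ENNReal.toReal_eq_one_iff] using h

/-! ### The cylinder set -/

/-- The sequences with a head at the origin. -/
def headSet : Set (ℤ → Bool) := {x | x 0 = true}

lemma measurableSet_coord (i : ℤ) : MeasurableSet {x : ℤ → Bool | x i = true} :=
  (measurable_pi_apply (X := fun _ : ℤ => Bool) i) (measurableSet_singleton true)

lemma bern_coord (i : ℤ) : bern {x | x i = true} = 2⁻¹ := by
  rw [← coin_true]
  exact (measurePreserving_eval_infinitePi (fun _ : ℤ => coin) i).measure_preimage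
    (measurableSet_singleton true).nullMeasurableSet

lemma bern_coord_inter {i j : ℤ} (hij : i ≠ j) :
    bern ({x | x i = true} ∩ {x | x j = true}) = 4⁻¹ := by
  have h : iIndepFun (fun (i : ℤ) (x : ℤ → Bool) => x i) bern :=
    iIndepFun_infinitePi (P := fun _ : ℤ => coin) (X := fun _ y => y) (fun _ => measurable_id)
  have := (h.indepFun hij).measure_inter_preimage_eq_mul {true} {true}
    (measurableSet_singleton _) (measurableSet_singleton _)
  change bern ({x | x i = true} ∩ {x | x j = true}) =
    bern {x | x i = true} * bern {x | x j = true} at this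
  rw [this, bern_coord, bern_coord, ← ENNReal.mul_inv (by simp) (by simp)]
  norm_num

lemma relabelledShift_iterate_image (σ : ℤ ≃ ℤ) (h0 : σ 0 = 0) (m : ℕ) :
    (relabelledShift σ)^[m] '' headSet = {x | x (σ m) = true} := by
  have key : ∀ x, (relabelledShift σ)^[m] x (σ m) = x 0 := fun x => by
    rw [relabelledShift_iterate, sub_self, h0]
  ext y
  constructor
  · rintro ⟨x, hx, rfl⟩
    exact (key x).trans hx
  · intro hy
    obtain ⟨x, rfl⟩ := (relabelledShift σ).surjective.iterate m y
    exact ⟨x, (key x).symm.trans hy, rfl⟩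

/-! ### The relabelling -/

/-- Two injections of `ℕ` into `ℤ` with infinite co-range differ by a permutation of `ℤ`. -/
lemma exists_perm_comp_eq {f g : ℕ → ℤ} (hf : f.Injective) (hg : g.Injective)
    (hf' : (range f)ᶜ.Infinite) (hg' : (range g)ᶜ.Infinite) :
    ∃ σ : ℤ ≃ ℤ, ∀ n, σ (f n) = g n := by
  classical
  have := hf'.to_subtype
  have := hg'.to_subtype
  obtain ⟨e⟩ := nonempty_equiv_of_countable (α := ↥(range f)ᶜ) (β := ↥(range g)ᶜ)
  refine ⟨(Equiv.Set.sumCompl (range f)).symm.trans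
    ((Equiv.sumCongr ((Equiv.ofInjective f hf).symm.trans (Equiv.ofInjective g hg)) e).trans
      (Equiv.Set.sumCompl (range g))), fun n => ?_⟩
  have : (Equiv.ofInjective f hf).symm ⟨f n, mem_range_self n⟩ = n :=
    (Equiv.symm_apply_eq _).2 rfl
  simp [Equiv.Set.sumCompl_symm_apply_of_mem (mem_range_self n), this]

lemma exists_strictMono_tail {p : ℕ → ℕ}
    (hp : Tendsto (fun n : ℕ => (p (n + 1) : ℤ) - (p n : ℤ)) atTop atTop) :
    ∃ n₀, ∀ n₁, n₀ ≤ n₁ → StrictMono (fun k => p (n₁ + k)) ∧ ∀ k, 0 < p (n₁ + k) := by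
  obtain ⟨m, hm⟩ := eventually_atTop.1 (hp.eventually_ge_atTop 1)
  refine ⟨m + 1, fun n₁ hn₁ => ⟨strictMono_nat_of_lt_succ fun k => ?_, fun k => ?_⟩⟩
  · have := hm (n₁ + k) (by omega)
    rw [← add_assoc]
    omega
  · have := hm (n₁ + k - 1) (by omega)
    rw [show n₁ + k - 1 + 1 = n₁ + k by omega] at this
    omega

lemma exists_relabelling {p q : ℕ → ℕ}
    (hp : Tendsto (fun n : ℕ => (p (n + 1) : ℤ) - (p n : ℤ)) atTop atTop)
    (hq : Tendsto (fun n : ℕ => (q (n + 1) : ℤ) - (q n : ℤ)) atTop atTop)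
    {A : Set ℕ} (hA : A.Infinite) :
    ∃ (σ : ℤ ≃ ℤ) (n₀ : ℕ), σ 0 = 0 ∧ ∀ n ≥ n₀, σ (q n) = p n ↔ n ∈ A := by
  classical
  obtain ⟨a, ha⟩ := exists_strictMono_tail hp
  obtain ⟨b, hb⟩ := exists_strictMono_tail hq
  obtain ⟨hpm, hp0⟩ := ha (max a b) (le_max_left _ _)
  obtain ⟨hqm, hq0⟩ := hb (max a b) (le_max_right _ _)
  set c := max a b
  let f : ℕ → ℤ := fun k => k.casesOn 0 fun k => (q (c + k) : ℤ)
  let g : ℕ → ℤ := fun k => k.casesOn 0 fun k =>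
    if c + k ∈ A then (p (c + k) : ℤ) else -(p (c + k) : ℤ)
  have hf : f.Injective := by
    rintro (_ | i) (_ | j) h
    · rfl
    · have := hq0 j
      replace h : 0 = (q (c + j) : ℤ) := h
      omega
    · have := hq0 i
      replace h : (q (c + i) : ℤ) = 0 := h
      omega
    · simp only [f, Nat.cast_inj] at h
      rw [hqm.injective h]
  have hg : g.Injective := by
    rintro (_ | i) (_ | j) h
    · rfl
    · have := hp0 j
      replace h : 0 = (if c + j ∈ A then (p (c + j) : ℤ) else -(p (c + j) : ℤ)) := h
      split_ifs at h <;> omega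
    · have := hp0 i
      replace h : (if c + i ∈ A then (p (c + i) : ℤ) else -(p (c + i) : ℤ)) = 0 := h
      split_ifs at h <;> omega
    · have h1 := hp0 i
      have h2 := hp0 j
      have : p (c + i) = p (c + j) := by
        simp only [g] at h
        split_ifs at h <;> omega
      rw [hpm.injective this]
  have hf' : (range f)ᶜ.Infinite := by
    refine (Iio_infinite (0 : ℤ)).mono ?_
    rintro x hx ⟨_ | k, rfl⟩
    · simp [f] at hx
    · simp only [f, mem_Iio] at hx
      omega
  -- the values `-p n` with `n ∈ A` are not taken by `g`
  have hg' : (range g)ᶜ.Infinite := by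
    have hA' : {k | c + k ∈ A}.Infinite := by
      intro hfin
      refine hA (((finite_Iio c).union (hfin.image fun k => c + k)).subset fun n hn => ?_)
      rcases lt_or_ge n c with h | h
      · exact Or.inl h
      · exact Or.inr ⟨n - c, by simpa [Nat.add_sub_cancel' h] using hn, by simp; omega⟩
    refine infinite_of_injOn_mapsTo (f := fun k => -(p (c + k) : ℤ)) ?_ ?_ hA'
    · intro i _ j _ h
      exact hpm.injective (by simpa using h)
    · rintro i (hi : c + i ∈ A) ⟨_ | j, hj⟩
      · have := hp0 i
        replace hj : 0 = -(p (c + i) : ℤ) := hj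
        omega
      · have h1 := hp0 i
        have h2 := hp0 j
        simp only [g] at hj
        split_ifs at hj with hjA
        · omega
        · have : i = j := hpm.injective (show p (c + i) = p (c + j) by omega)
          exact hjA (this ▸ hi)
  obtain ⟨σ, hσ⟩ := exists_perm_comp_eq hf hg hf' hg'
  refine ⟨σ, c, hσ 0, fun n hn => ?_⟩
  obtain ⟨k, rfl⟩ := Nat.exists_eq_add_of_le hn
  have h1 : σ (q (c + k)) = g (k + 1) := hσ (k + 1)
  have h2 := hp0 k
  rw [h1]
  simp only [g]
  split_ifs with h
  · simp [h]
  · simp only [h, iff_false]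
    omega

/-! ### Averages over factorial blocks -/

/-- If `a` stays within distance `1` of `c`, and `a n = c` for all large `n` in the blocks
`[k!, (k+1)!)` with `k` in the range of `κ`, then the averages up to the right endpoints of these blocks tend to `c`. -/
lemma tendsto_average_of_eq_on_blocks {a : ℕ → ℝ} {c : ℝ} {κ : ℕ → ℕ} {n₀ : ℕ}
    (hκ : StrictMono κ) (hb : ∀ n, |a n - c| ≤ 1)
    (h : ∀ j n, n₀ ≤ n → (κ j)! ≤ n → n < (κ j + 1)! → a n = c) :
    Tendsto (fun j => (∑ n ∈ Finset.Icc 1 (κ j + 1)!, a n) / ((κ j + 1)! : ℝ)) atTop (𝓝 c) := by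
  have hlim : Tendsto (fun j => 2 / ((κ j : ℝ) + 1)) atTop (𝓝 0) := by
    refine Tendsto.div_atTop tendsto_const_nhds ?_
    exact tendsto_atTop_add_const_right _ _ (tendsto_natCast_atTop_atTop.comp hκ.tendsto_atTop)
  rw [tendsto_iff_dist_tendsto_zero]
  refine squeeze_zero' (Eventually.of_forall fun _ => dist_nonneg) ?_ hlim
  filter_upwards [hκ.tendsto_atTop.eventually_ge_atTop n₀] with j hj
  set k := κ j
  have hk0 : n₀ ≤ k ! := hj.trans (Nat.self_le_factorial k)
  have hpos : (0 : ℝ) < ((k + 1)! : ℝ) := by exact_mod_cast Nat.factorial_pos _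
  have hk1 : (1 : ℝ) ≤ (k ! : ℝ) := by exact_mod_cast Nat.factorial_pos k
  have hsum : |∑ n ∈ Finset.Icc 1 (k + 1)!, (a n - c)| ≤ (k ! : ℝ) + 1 := by
    -- only the indices below `k!` and the right endpoint contribute
    have hsub : ∑ n ∈ Finset.Icc 1 (k + 1)!, |a n - c| ≤
        ∑ n ∈ insert (k + 1)! (Finset.range k !), |a n - c| := by
      rw [← Finset.sum_filter_ne_zero]
      refine Finset.sum_le_sum_of_subset_of_nonneg (fun n hn => ?_) fun _ _ _ => abs_nonneg _
      obtain ⟨hn, hne⟩ := Finset.mem_filter.1 hn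
      by_contra hnot
      simp only [Finset.mem_insert, Finset.mem_range, not_or, not_lt, Finset.mem_Icc] at hnot hn
      exact hne (by rw [h j n (hk0.trans hnot.2) hnot.2 (lt_of_le_of_ne hn.2 hnot.1)]; simp)
    calc |∑ n ∈ Finset.Icc 1 (k + 1)!, (a n - c)|
        ≤ ∑ n ∈ Finset.Icc 1 (k + 1)!, |a n - c| := Finset.abs_sum_le_sum_abs _ _
      _ ≤ ∑ n ∈ insert (k + 1)! (Finset.range k !), |a n - c| := hsub
      _ ≤ ∑ n ∈ insert (k + 1)! (Finset.range k !), (1 : ℝ) := Finset.sum_le_sum fun n _ => hb n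
      _ ≤ (k ! : ℝ) + 1 := by
        rw [Finset.sum_const, nsmul_eq_mul, mul_one]
        have := Finset.card_insert_le (k + 1)! (Finset.range k !)
        rw [Finset.card_range] at this
        exact_mod_cast this
  have hdiff : (∑ n ∈ Finset.Icc 1 (k + 1)!, a n) / ((k + 1)! : ℝ) - c =
      (∑ n ∈ Finset.Icc 1 (k + 1)!, (a n - c)) / ((k + 1)! : ℝ) := by
    rw [Finset.sum_sub_distrib, Finset.sum_const, Nat.card_Icc, nsmul_eq_mul]
    field_simp
    simp [mul_comm]
  have hfac : ((k + 1)! : ℝ) = ((k : ℝ) + 1) * (k ! : ℝ) := by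
    rw [Nat.factorial_succ]
    push_cast
    rfl
  rw [Real.dist_eq, hdiff, abs_div, abs_of_pos hpos, div_le_div_iff₀ hpos (by positivity)]
  calc _ ≤ ((k ! : ℝ) + 1) * ((k : ℝ) + 1) := by gcongr
    _ ≤ 2 * ((k + 1)! : ℝ) := by
      rw [hfac]
      nlinarith [mul_nonneg (sub_nonneg.2 hk1) (by positivity : (0 : ℝ) ≤ (k : ℝ) + 1)]

/-- The union of the blocks `[(2j)!, (2j+1)!)`. -/
def evenBlocks : Set ℕ := {n | ∃ j, (2 * j)! ≤ n ∧ n < (2 * j + 1)!}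

lemma evenBlocks_infinite : evenBlocks.Infinite := by
  rw [infinite_iff_exists_gt]
  intro m
  refine ⟨(2 * (m + 1))!, ⟨m + 1, le_rfl, ?_⟩, ?_⟩
  · exact (Nat.factorial_lt (by omega)).2 (by omega)
  · have := Nat.self_le_factorial (2 * (m + 1))
    omega

lemma notMem_evenBlocks {n j : ℕ} (h1 : (2 * j + 1)! ≤ n) (h2 : n < (2 * j + 1 + 1)!) :
    n ∉ evenBlocks := by
  rintro ⟨i, h3, h4⟩
  have h5 : 2 * i < 2 * j + 1 + 1 := by
    by_contra h
    exact absurd (Nat.factorial_le (not_lt.1 h)) (by omega)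
  have h6 : 2 * j + 1 < 2 * i + 1 := by
    by_contra h
    exact absurd (Nat.factorial_le (not_lt.1 h)) (by omega)
  omega

lemma strictMono_factorial_comp {κ : ℕ → ℕ} (hκ : StrictMono κ) :
    StrictMono fun j => (κ j + 1)! := fun _ _ hij =>
  (Nat.factorial_lt (Nat.succ_pos _)).2 (Nat.succ_lt_succ (hκ hij))

end DivergentAverages

open DivergentAverages

/-- If the gaps of `p` and `q` tend to infinity, then there are a probability space,
ergodic measure-preserving bijections `S, T`, and a set `C` with `0 < μ(C) < 1` such that
the ergodic averages `(1/N) ∑_{n=1}^N μ(S^{p(n)}C ∩ T^{q(n)}C)` converge to `μ(C)` along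
one subsequence `N_k` and to `μ(C)²` along another subsequence `M_k`; in particular they
diverge. -/
theorem exists_ergodic_divergent_averages
    (p q : ℕ → ℕ)
    (hp : Tendsto (fun n : ℕ => (p (n + 1) : ℤ) - (p n : ℤ)) atTop atTop)
    (hq : Tendsto (fun n : ℕ => (q (n + 1) : ℤ) - (q n : ℤ)) atTop atTop) :
    ∃ (X : Type) (_ : MeasurableSpace X) (μ : Measure X), IsProbabilityMeasure μ ∧
      ∃ S T : X ≃ᵐ X,
        MeasurePreserving S μ μ ∧ MeasurePreserving T μ μ ∧
        Ergodic (⇑S) μ ∧ Ergodic (⇑T) μ ∧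
        ∃ C : Set X, MeasurableSet C ∧ 0 < μ C ∧ μ C < 1 ∧
          ∃ N M : ℕ → ℕ, StrictMono N ∧ StrictMono M ∧
            Tendsto
              (fun k => (∑ n ∈ Finset.Icc 1 (N k),
                  (μ ((⇑S)^[p n] '' C ∩ (⇑T)^[q n] '' C)).toReal) / (N k : ℝ))
              atTop (𝓝 (μ C).toReal) ∧
            Tendsto
              (fun k => (∑ n ∈ Finset.Icc 1 (M k),
                  (μ ((⇑S)^[p n] '' C ∩ (⇑T)^[q n] '' C)).toReal) / (M k : ℝ))
              atTop (𝓝 ((μ C).toReal ^ 2)) := by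
  obtain ⟨σ, n₀, hσ0, hσ⟩ := exists_relabelling hp hq evenBlocks_infinite
  have hC : bern headSet = 2⁻¹ := bern_coord 0
  set a : ℕ → ℝ := fun n => (bern ((relabelledShift (Equiv.refl ℤ))^[p n] '' headSet ∩
    (relabelledShift σ)^[q n] '' headSet)).toReal with ha
  have hasame : ∀ n, n₀ ≤ n → n ∈ evenBlocks → a n = 2⁻¹ := fun n hn hA => by
    simp only [ha]
    rw [relabelledShift_iterate_image _ rfl, relabelledShift_iterate_image _ hσ0,
      (hσ n hn).2 hA, Equiv.refl_apply, Set.inter_self, bern_coord]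
    simp
  have hadiff : ∀ n, n₀ ≤ n → n ∉ evenBlocks → a n = 4⁻¹ := fun n hn hA => by
    simp only [ha]
    rw [relabelledShift_iterate_image _ rfl, relabelledShift_iterate_image _ hσ0,
      Equiv.refl_apply, bern_coord_inter fun h => hA ((hσ n hn).1 h.symm)]
    simp
  have ha0 : ∀ n, 0 ≤ a n := fun n => ENNReal.toReal_nonneg
  have ha1 : ∀ n, a n ≤ 1 := fun n => measureReal_le_one
  have heven : StrictMono fun j : ℕ => 2 * j := fun i j h => by simpa using h
  have hodd : StrictMono fun j : ℕ => 2 * j + 1 := fun i j h => by simpa using h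
  refine ⟨ℤ → Bool, inferInstance, bern, inferInstance, relabelledShift (Equiv.refl ℤ),
    relabelledShift σ, relabelledShift_measurePreserving _, relabelledShift_measurePreserving _,
    relabelledShift_ergodic _, relabelledShift_ergodic _, headSet, measurableSet_coord 0,
    by simp [hC], by simp [hC], _, _, strictMono_factorial_comp heven,
    strictMono_factorial_comp hodd, ?_, ?_⟩
  · have h2 : (bern headSet).toReal = 2⁻¹ := by simp [hC]
    rw [h2]
    refine tendsto_average_of_eq_on_blocks (a := a) (n₀ := n₀) heven (fun n => ?_)
      fun j n hn h1 h2 => hasame n hn ⟨j, h1, h2⟩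
    rw [abs_le]
    constructor <;> linarith [ha0 n, ha1 n]
  · have h4 : (bern headSet).toReal ^ 2 = 4⁻¹ := by
      rw [hC]
      norm_num
    rw [h4]
    refine tendsto_average_of_eq_on_blocks (a := a) (n₀ := n₀) hodd (fun n => ?_)
      fun j n hn h1 h2 => hadiff n hn (notMem_evenBlocks h1 h2)
    rw [abs_le]
    constructor <;> linarith [ha0 n, ha1 n]
end

section
/- There exist a probability space (X, μ), measure-preserving measurable bijections S and T of X which are both mixing — i.e. μ(S^n A ∩ B) → μ(A)μ(B) and μ(T^n A ∩ B) → μ(A)μ(B) as n → ∞, for all measurable sets A, B — and a measurable set D with μ(D) > 0 such that S^n D ∩ T^n D = ∅ for every n > 0. -/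
open MeasureTheory Filter Topology

/-!
Take the Bernoulli shift `S` on `{0,1}^ℤ` with the fair product measure, and let `φ` be the
involution that flips every coordinate of positive index. Put `T = φ S φ⁻¹` and
`D = {x | x 0 = 1}`. Since `φ` does not touch the coordinate `0`, `φ D = D`, and for `n > 0`
`Sⁿ D = {x | x n = 1}` whereas `Tⁿ D = φ (Sⁿ D) = {x | x n = 0}`, so the two sets are disjoint.

`T` inherits measure preservation and mixing from `S` by conjugation. Mixing of `S` on cylinders is
independence of the coordinates in disjoint finite windows (`tendsto_shift_cylinder`); it extends
to all measurable sets by two applications of `tendsto_measure_of_piSystem`, a π-λ argument for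
setwise convergence of measures dominated by a fixed finite measure.
-/

namespace MixingRepelling

/-- Setwise convergence of measures bounded by a fixed finite measure can be tested on a generating
π-system that contains the whole space; countable unions are handled by dominated convergence. -/
lemma tendsto_measure_of_piSystem {X : Type*} {m : MeasurableSpace X} {μ ρ : Measure X}
    [IsFiniteMeasure μ] [IsFiniteMeasure ρ] {ν : ℕ → Measure X} (hν : ∀ n, ν n ≤ μ)
    {C : Set (Set X)} (hC : m = MeasurableSpace.generateFrom C) (hpi : IsPiSystem C)
    (huniv : Set.univ ∈ C)
    (h : ∀ A ∈ C, Tendsto (fun n => (ν n).real A) atTop (𝓝 (ρ.real A)))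
    (A : Set X) (hA : MeasurableSet A) :
    Tendsto (fun n => (ν n).real A) atTop (𝓝 (ρ.real A)) := by
  have hfin (n : ℕ) : IsFiniteMeasure (ν n) := isFiniteMeasure_of_le μ (hν n)
  have hsum (κ : Measure X) [IsFiniteMeasure κ] (f : ℕ → Set X)
      (hd : Pairwise (Function.onFun Disjoint f)) (hf : ∀ i, MeasurableSet (f i)) :
      κ.real (⋃ i, f i) = ∑' i, κ.real (f i) := by
    simp only [Measure.real]
    rw [measure_iUnion hd hf, ENNReal.tsum_toReal_eq (fun i => measure_ne_top _ _)]
  induction A, hA using MeasurableSpace.induction_on_inter hC hpi with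
  | empty => simp
  | basic t ht => exact h t ht
  | compl t htm ih =>
    simp only [measureReal_compl htm]
    exact (h _ huniv).sub ih
  | iUnion f hd hf ih =>
    rw [hsum ρ f hd hf]
    simp only [hsum _ f hd hf]
    refine tendsto_tsum_of_dominated_convergence (bound := fun i => μ.real (f i)) ?_ ih ?_
    · refine ENNReal.summable_toReal ?_
      rw [← measure_iUnion hd hf]
      exact measure_ne_top _ _
    · refine Eventually.of_forall fun n i => ?_
      rw [Real.norm_of_nonneg measureReal_nonneg]
      exact ENNReal.toReal_mono (measure_ne_top _ _) (hν n _)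

/-- The fair coin on `Bool`. -/
noncomputable def coin : Measure Bool := (PMF.uniformOfFintype Bool).toMeasure

instance : IsProbabilityMeasure coin := by unfold coin; infer_instance

lemma coin_singleton (b : Bool) : coin {b} = 2⁻¹ := by
  simp [coin]

lemma coin_map_not : coin.map (fun b => !b) = coin := by
  refine Measure.ext_of_singleton fun b => ?_
  rw [Measure.map_apply (by fun_prop) (measurableSet_singleton _)]
  have : (fun b : Bool => !b) ⁻¹' {b} = {!b} := by ext c; cases b <;> cases c <;> simp
  rw [this, coin_singleton, coin_singleton]

/-- The fair Bernoulli measure on two-sided binary sequences. -/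
noncomputable def bern : Measure (ℤ → Bool) := Measure.infinitePi fun _ => coin

instance : IsProbabilityMeasure bern := by unfold bern; infer_instance

/-- The shift moving every symbol one place to the right. Its inverse reads `x (i + 1)` at `i`, so
`x ∈ shiftⁿ A` is decided by reading `A` off `x` translated by `n`. -/
def shift : (ℤ → Bool) ≃ᵐ (ℤ → Bool) where
  toFun x i := x (i - 1)
  invFun x i := x (i + 1)
  left_inv x := by ext i; simp
  right_inv x := by ext i; simp
  measurable_toFun := by simp only [Equiv.coe_fn_mk]; fun_prop
  measurable_invFun := by simp only [Equiv.coe_fn_symm_mk]; fun_prop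

/-- The involution negating the symbols at all positive places. -/
def flipPos : (ℤ → Bool) ≃ᵐ (ℤ → Bool) where
  toFun x i := if 0 < i then !(x i) else x i
  invFun x i := if 0 < i then !(x i) else x i
  left_inv x := by ext i; by_cases h : 0 < i <;> simp [h]
  right_inv x := by ext i; by_cases h : 0 < i <;> simp [h]
  measurable_toFun := by
    simp only [Equiv.coe_fn_mk]
    refine measurable_pi_lambda _ fun i => ?_
    by_cases h : 0 < i <;> simp only [h, if_true, if_false] <;> fun_prop
  measurable_invFun := by
    simp only [Equiv.coe_fn_symm_mk]
    refine measurable_pi_lambda _ fun i => ?_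
    by_cases h : 0 < i <;> simp only [h, if_true, if_false] <;> fun_prop

lemma flipPos_apply (x : ℤ → Bool) (i : ℤ) : flipPos x i = if 0 < i then !(x i) else x i := rfl

lemma flipPos_flipPos (x : ℤ → Bool) : flipPos (flipPos x) = x := flipPos.left_inv x

/-- Translation by `n`, which is the inverse of the `n`-th power of `shift`. -/
def translateBy (n : ℤ) (x : ℤ → Bool) : ℤ → Bool := fun i => x (i + n)

lemma measurePreserving_translateBy (n : ℤ) : MeasurePreserving (translateBy n) bern bern :=
  ⟨by unfold translateBy; fun_prop,
    Measure.map_infinitePi_infinitePi_of_inj (P := fun _ : ℤ => coin)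
      (f := fun i : ℤ => i + n) (add_left_injective n)⟩

lemma measurePreserving_shift : MeasurePreserving shift bern bern :=
  measurePreserving_translateBy (-1)

lemma measurePreserving_flipPos : MeasurePreserving flipPos bern bern := by
  refine ⟨flipPos.measurable, ?_⟩
  have h := Measure.infinitePi_map_pi (fun _ : ℤ => coin)
    (f := fun (i : ℤ) (b : Bool) => if 0 < i then !b else b) (fun i => by fun_prop)
  refine h.trans ?_
  unfold bern
  congr 1
  funext i
  by_cases hi : 0 < i
  · simpa only [hi, if_true] using coin_map_not
  · simp only [hi, if_false]
    exact Measure.map_id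

lemma shift_iterate (n : ℕ) (x : ℤ → Bool) (i : ℤ) : shift^[n] x i = x (i - n) := by
  induction n generalizing i with
  | zero => simp
  | succ n ih =>
    rw [Function.iterate_succ_apply']
    change shift^[n] x (i - 1) = _
    rw [ih]
    congr 1
    push_cast
    ring

lemma image_shift_iterate (n : ℕ) (A : Set (ℤ → Bool)) :
    shift^[n] '' A = translateBy n ⁻¹' A := by
  refine Set.image_eq_preimage_of_inverse (fun x => ?_) (fun x => ?_) |> congrFun <| A
  · ext i; simp [translateBy, shift_iterate]
  · ext i; simp [translateBy, shift_iterate]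

/-- For cylinders the mixing limit is attained as soon as the two windows are disjoint. -/
lemma tendsto_shift_cylinder {A B : Set (ℤ → Bool)}
    (hA : A ∈ measurableCylinders fun _ : ℤ => Bool)
    (hB : B ∈ measurableCylinders fun _ : ℤ => Bool) :
    Tendsto (fun n : ℕ => bern.real (translateBy n ⁻¹' A ∩ B)) atTop
      (𝓝 (bern.real A * bern.real B)) := by
  obtain ⟨s, A₀, hA₀, rfl⟩ := (mem_measurableCylinders _).1 hA
  obtain ⟨t, B₀, hB₀, rfl⟩ := (mem_measurableCylinders _).1 hB
  have hev : ∀ᶠ n : ℕ in atTop, Disjoint (s.image (· + (n : ℤ))) t := by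
    obtain ⟨a, ha⟩ := s.bddBelow
    obtain ⟨b, hb⟩ := t.bddAbove
    filter_upwards [eventually_gt_atTop (b - a).toNat] with n hn
    rw [Finset.disjoint_left]
    intro i hi hit
    obtain ⟨j, hj, rfl⟩ := Finset.mem_image.1 hi
    have h1 := ha hj
    have h2 := hb hit
    omega
  refine tendsto_const_nhds.congr' ?_
  filter_upwards [hev] with n hn
  have hind : ProbabilityTheory.iIndepFun (fun (i : ℤ) (x : ℤ → Bool) => x i) bern :=
    ProbabilityTheory.iIndepFun_infinitePi (P := fun _ : ℤ => coin)
      (X := fun _ b => b) (fun _ => measurable_id)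
  have hpair := hind.indepFun_finset _ _ hn (fun i => measurable_pi_apply i)
  let A₁ : Set (s.image (· + (n : ℤ)) → Bool) :=
    (fun z (i : s) => z ⟨i + n, Finset.mem_image_of_mem _ i.2⟩) ⁻¹' A₀
  have hA₁ : MeasurableSet A₁ := by
    refine MeasurableSet.preimage hA₀ ?_
    fun_prop
  have key := hpair.measure_inter_preimage_eq_mul A₁ B₀ hA₁ hB₀
  rw [← (measurePreserving_translateBy n).measureReal_preimage
    (MeasurableSet.cylinder s hA₀).nullMeasurableSet]
  simp only [Measure.real, ← ENNReal.toReal_mul]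
  exact congrArg ENNReal.toReal key.symm

lemma mixing_translateBy {A B : Set (ℤ → Bool)} (hA : MeasurableSet A) (hB : MeasurableSet B) :
    Tendsto (fun n : ℕ => bern.real (translateBy n ⁻¹' A ∩ B)) atTop
      (𝓝 (bern.real A * bern.real B)) := by
  have hmeas (n : ℕ) : Measurable (translateBy n) := (measurePreserving_translateBy n).measurable
  have hgen := (generateFrom_measurableCylinders (α := fun _ : ℤ => Bool)).symm
  have hpi := isPiSystem_measurableCylinders (α := fun _ : ℤ => Bool)
  have huniv := univ_mem_measurableCylinders (fun _ : ℤ => Bool)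
  -- For a cylinder `A`, vary `B`: the measures are the restrictions of `bern` to `Sⁿ A`.
  have step {A : Set (ℤ → Bool)} (hA : A ∈ measurableCylinders fun _ : ℤ => Bool) :
      Tendsto (fun n : ℕ => bern.real (translateBy n ⁻¹' A ∩ B)) atTop
        (𝓝 (bern.real A * bern.real B)) := by
    have h := tendsto_measure_of_piSystem (μ := bern) (ρ := (bern.real A).toNNReal • bern)
      (ν := fun n : ℕ => bern.restrict (translateBy n ⁻¹' A))
      (fun n => Measure.restrict_le_self) hgen hpi huniv (fun B hB => ?_) B hB
    · simpa [measureReal_restrict_apply hB, Set.inter_comm] using h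
    · have := tendsto_shift_cylinder hA hB
      simpa [measureReal_restrict_apply (MeasurableSet.of_mem_measurableCylinders hB),
        Set.inter_comm] using this
  -- For arbitrary `B`, vary `A`: the measures are the images of the restriction of `bern` to `B`.
  have hval {A : Set (ℤ → Bool)} (hA : MeasurableSet A) (n : ℕ) :
      ((bern.restrict B).map (translateBy n)).real A = bern.real (translateBy n ⁻¹' A ∩ B) := by
    rw [map_measureReal_apply (hmeas n) hA, measureReal_restrict_apply (hmeas n hA)]
  have h := tendsto_measure_of_piSystem (μ := bern) (ρ := (bern.real B).toNNReal • bern)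
    (ν := fun n : ℕ => (bern.restrict B).map (translateBy n))
    (fun n => (Measure.map_mono Measure.restrict_le_self (hmeas n)).trans
      (measurePreserving_translateBy n).map_eq.le) hgen hpi huniv (fun A hA => ?_) A hA
  · simpa [hval hA, mul_comm] using h
  · simpa [hval (MeasurableSet.of_mem_measurableCylinders hA), mul_comm] using step hA

lemma conj_iterate (n : ℕ) (x : ℤ → Bool) :
    ((flipPos.trans shift).trans flipPos)^[n] x = flipPos (shift^[n] (flipPos x)) := by
  induction n with
  | zero => simp [flipPos_flipPos]
  | succ n ih =>
    rw [Function.iterate_succ_apply', Function.iterate_succ_apply', ih]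
    simp [flipPos_flipPos]

lemma image_conj_iterate (n : ℕ) (A : Set (ℤ → Bool)) :
    ((flipPos.trans shift).trans flipPos)^[n] '' A = flipPos ⁻¹' (translateBy n ⁻¹' (flipPos ⁻¹' A)) := by
  have h (A : Set (ℤ → Bool)) : flipPos '' A = flipPos ⁻¹' A :=
    congrFun (Set.image_eq_preimage_of_inverse flipPos_flipPos flipPos_flipPos) A
  rw [← h A, ← image_shift_iterate, ← h, Set.image_image, Set.image_image]
  exact Set.image_congr fun x _ => conj_iterate n x

end MixingRepelling

open MixingRepelling in
/-- There are a probability space, mixing measure-preserving bijections `S, T`, and a set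
`D` of positive measure such that `SⁿD ∩ TⁿD = ∅` for every `n > 0`. -/
theorem exists_mixing_repelling_pair :
    ∃ (X : Type) (_ : MeasurableSpace X) (μ : Measure X), IsProbabilityMeasure μ ∧
      ∃ S T : X ≃ᵐ X,
        MeasurePreserving S μ μ ∧ MeasurePreserving T μ μ ∧
        (∀ A B : Set X, MeasurableSet A → MeasurableSet B →
          Tendsto (fun n : ℕ => (μ ((⇑S)^[n] '' A ∩ B)).toReal) atTop
            (𝓝 ((μ A).toReal * (μ B).toReal))) ∧
        (∀ A B : Set X, MeasurableSet A → MeasurableSet B →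
          Tendsto (fun n : ℕ => (μ ((⇑T)^[n] '' A ∩ B)).toReal) atTop
            (𝓝 ((μ A).toReal * (μ B).toReal))) ∧
        ∃ D : Set X, MeasurableSet D ∧ 0 < μ D ∧
          ∀ n : ℕ, 0 < n → (⇑S)^[n] '' D ∩ (⇑T)^[n] '' D = ∅ := by
  refine ⟨ℤ → Bool, inferInstance, bern, inferInstance, shift, (flipPos.trans shift).trans flipPos,
    measurePreserving_shift,
    measurePreserving_flipPos.comp (measurePreserving_shift.comp measurePreserving_flipPos),
    fun A B hA hB => ?_, fun A B hA hB => ?_, (fun x => x 0) ⁻¹' {true}, ?_, ?_, fun n hn => ?_⟩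
  · simp only [image_shift_iterate]
    exact mixing_translateBy hA hB
  · have hA' := flipPos.measurable hA
    have hB' := flipPos.measurable hB
    have h := mixing_translateBy hA' hB'
    rw [measurePreserving_flipPos.measureReal_preimage hA.nullMeasurableSet,
      measurePreserving_flipPos.measureReal_preimage hB.nullMeasurableSet] at h
    refine h.congr fun n => ?_
    have hm : MeasurableSet (translateBy n ⁻¹' (flipPos ⁻¹' A) ∩ flipPos ⁻¹' B) :=
      ((measurePreserving_translateBy n).measurable hA').inter hB'
    rw [image_conj_iterate, ← measurePreserving_flipPos.measureReal_preimage hm.nullMeasurableSet,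
      Set.preimage_inter, ← Set.preimage_comp (f := flipPos) (g := flipPos) (s := B),
      show (flipPos ∘ flipPos : (ℤ → Bool) → ℤ → Bool) = id from funext flipPos_flipPos]
    rfl
  · exact measurable_pi_apply 0 (measurableSet_singleton true)
  · have h := (measurePreserving_eval_infinitePi (fun _ : ℤ => coin) 0).measure_preimage
      (measurableSet_singleton true).nullMeasurableSet
    rw [coin_singleton] at h
    refine lt_of_lt_of_eq ?_ h.symm
    simp
  · rw [image_shift_iterate, image_conj_iterate]
    ext x
    simp [translateBy, flipPos_apply, hn]
end
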